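/- arXiv:2105.12533 — 7 statements merged into one kernel-verified Lean document; each statement's English description precedes it below -/
import Mathlib

section
/- Let g be a finite-dimensional real Lie algebra equipped with an inner product ⟨·,·⟩ that is invariant in the sense that ⟨[x,y],z⟩ = ⟨x,[y,z]⟩ for all x,y,z ∈ g. Let σ and τ be involutive Lie algebra automorphisms of g preserving the inner product, and set m := {x ∈ g : σ(x) = −x} and p := {x ∈ g : τ(x) = −x}. Let t be an abelian subspace of m ∩ p ([η,η'] = 0 for all η,η' ∈ t) that is maximal abelian in m ∩ p, i.e., every x ∈ m ∩ p with [x,η] = 0 for all η ∈ t belongs to t. For β ∈ t put g_β := {x ∈ g : [η,[η,x]] = −⟨β,η⟩² x for all η ∈ t}. Let α ∈ t with α ≠ 0, and assume g_α ≠ {0}, g_{2α} ≠ {0} and g_{3α} = {0}. Then dim g_α > dim g_{2α}. -/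
open scoped RealInnerProductSpace

/-- The restricted root space `g_β = {x ∈ g : [η,[η,x]] = -⟨β,η⟩² x for all η ∈ t}`
associated with a bilinear bracket `B` on `g`, an abelian subspace `t` and a vector `β`. -/
def restrictedRootSpace {g : Type*} [NormedAddCommGroup g] [InnerProductSpace ℝ g]
    (B : g →ₗ[ℝ] g →ₗ[ℝ] g) (t : Submodule ℝ g) (β : g) : Submodule ℝ g where
  carrier := {x : g | ∀ η ∈ t, B η (B η x) = (-(⟪β, η⟫ ^ 2)) • x}
  add_mem' := by
    intro x y hx hy η hη
    rw [map_add, map_add, hx η hη, hy η hη, smul_add]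
  zero_mem' := by
    intro η hη
    rw [map_zero, map_zero, smul_zero]
  smul_mem' := by
    intro c x hx η hη
    rw [map_smul, map_smul, hx η hη, smul_comm]

/-! Pass to the complexification. A root vector `z = a - i a'` for `α` has real and imaginary
parts `a, a' ∈ g_α`, and `σ`, `τ` followed by complex conjugation act on these vectors as
antilinear isometric involutions. Their product is complex linear, so it has an eigenvector, which
may be chosen fixed by the first one; then `[a, a'] ∈ m ∩ p`, and maximality of `t` gives
`[a, a'] = |a|² α`, that is, `[z, conj z] = 2i|a|² α`. If `w` is a root vector for `2α`, then
`[z, w] = 0` because `g_{3α} = 0`, so `[z, [conj z, w]] = [[z, conj z], w] = -4|a|²|α|² w`. Hence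
`ad z` maps the root vectors for `α` onto those for `2α`, and it kills `z`. -/

theorem finrank_lt_finrank_of_le_map {K V V' : Type*} [DivisionRing K] [AddCommGroup V]
    [Module K V] [AddCommGroup V'] [Module K V'] {f : V →ₗ[K] V'} {S : Submodule K V}
    [FiniteDimensional K S] {S' : Submodule K V'} (hS' : S' ≤ S.map f) {x : V} (hx : x ∈ S)
    (hx0 : x ≠ 0) (hfx : f x = 0) : Module.finrank K S' < Module.finrank K S := by
  have hker : Nontrivial (LinearMap.ker (f.domRestrict S)) :=
    Submodule.nontrivial_iff_ne_bot.mpr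
      ((Submodule.ne_bot_iff _).mpr ⟨⟨x, hx⟩, hfx, fun h => hx0 (congrArg Subtype.val h)⟩)
  calc Module.finrank K S' ≤ Module.finrank K (LinearMap.range (f.domRestrict S)) :=
        Submodule.finrank_mono (by rwa [LinearMap.range_domRestrict])
    _ < Module.finrank K S := by
        rw [← LinearMap.finrank_range_add_finrank_ker (f.domRestrict S)]
        exact Nat.lt_add_of_pos_right Module.finrank_pos

section ComplexStructure

variable {V : Type*} [AddCommGroup V] [Module ℝ V]

theorem exists_complex_eigenvector [FiniteDimensional ℝ V] [Nontrivial V] {J U : Module.End ℝ V}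
    (hJ : J * J = -1) (hU : ∀ x, U (J x) = J (U x)) :
    ∃ x ≠ 0, ∃ p q : ℝ, U x = p • x + q • J x := by
  let _ : Module ℂ V := Module.compHom V (Complex.liftAux J hJ).toRingHom
  have complex_smul (c : ℂ) (x : V) : c • x = c.re • x + c.im • J x := rfl
  have : IsScalarTower ℝ ℂ V := ⟨fun r c x => by
    simp only [complex_smul, Complex.smul_re, Complex.smul_im, smul_eq_mul, mul_smul, smul_add]⟩
  have : FiniteDimensional ℂ V := Module.Finite.of_restrictScalars_finite ℝ ℂ V
  let Uc : Module.End ℂ V :=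
    { toFun := U
      map_add' := map_add U
      map_smul' := fun c x => by simp [complex_smul, hU] }
  obtain ⟨c, hc⟩ := Module.End.exists_eigenvalue Uc
  obtain ⟨x, hx⟩ := hc.exists_hasEigenvector
  exact ⟨x, hx.2, c.re, c.im, hx.apply_eq_smul⟩

theorem exists_ne_zero_apply_eq_self {J σ : Module.End ℝ V} (hJ : ∀ x, J (J x) = -x)
    (hσ : ∀ x, σ (σ x) = x) (hσJ : ∀ x, σ (J x) = -J (σ x)) {W : Submodule ℝ V}
    (hJW : ∀ x ∈ W, J x ∈ W) (hσW : ∀ x ∈ W, σ x ∈ W) (hW : W ≠ ⊥) :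
    ∃ a ∈ W, a ≠ 0 ∧ σ a = a := by
  obtain ⟨x, hx, hx0⟩ := W.exists_mem_ne_zero_of_ne_bot hW
  by_cases h : x + σ x = 0
  · have hσx : σ x = -x := eq_neg_of_add_eq_zero_right h
    refine ⟨J x, hJW x hx, fun hJx => hx0 ?_, by rw [hσJ, hσx, map_neg, neg_neg]⟩
    simpa [hJx] using hJ x
  · exact ⟨x + σ x, W.add_mem hx (hσW x hx), h, by rw [map_add, hσ, add_comm]⟩

end ComplexStructure

section Conjugations

variable {E : Type*} [NormedAddCommGroup E] [InnerProductSpace ℝ E]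

theorem norm_smul_add_smul_sq {J : Module.End ℝ E} (hJ : ∀ x, J (J x) = -x)
    (hskew : ∀ x y, ⟪J x, y⟫ = -⟪x, J y⟫) (p q : ℝ) (x : E) :
    ‖p • x + q • J x‖ ^ 2 = (p ^ 2 + q ^ 2) * ‖x‖ ^ 2 := by
  have inner_J : ⟪x, J x⟫ = 0 := by linarith [hskew x x, real_inner_comm x (J x)]
  have norm_J : ‖J x‖ ^ 2 = ‖x‖ ^ 2 := by
    rw [← real_inner_self_eq_norm_sq, hskew, hJ, inner_neg_right, neg_neg,
      real_inner_self_eq_norm_sq]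
  rw [norm_add_sq_real, real_inner_smul_left, real_inner_smul_right, inner_J, norm_smul, norm_smul,
    mul_pow, mul_pow, norm_J, Real.norm_eq_abs, Real.norm_eq_abs, sq_abs, sq_abs]
  ring

theorem exists_common_eigenvector_of_conjugations [FiniteDimensional ℝ E] [Nontrivial E]
    {J σ τ : Module.End ℝ E} (hJ : ∀ x, J (J x) = -x) (hskew : ∀ x y, ⟪J x, y⟫ = -⟪x, J y⟫)
    (hσ : ∀ x, σ (σ x) = x) (hτ : ∀ x, τ (τ x) = x)
    (hσJ : ∀ x, σ (J x) = -J (σ x)) (hτJ : ∀ x, τ (J x) = -J (τ x))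
    (hσnorm : ∀ x, ‖σ x‖ = ‖x‖) (hτnorm : ∀ x, ‖τ x‖ = ‖x‖) :
    ∃ a ≠ 0, σ a = a ∧ ∃ p q : ℝ, p ^ 2 + q ^ 2 = 1 ∧ τ a = p • a + q • J a := by
  have hστJ (x : E) : (σ * τ) (J x) = J ((σ * τ) x) := by simp [hσJ, hτJ]
  obtain ⟨x, hx0, p, q, hx⟩ := exists_complex_eigenvector (LinearMap.ext hJ) hστJ
  have hpq : p ^ 2 + q ^ 2 = 1 := by
    refine mul_right_cancel₀ (pow_ne_zero 2 (norm_ne_zero_iff.mpr hx0)) ?_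
    rw [← norm_smul_add_smul_sq hJ hskew, ← hx, Module.End.mul_apply, hσnorm, hτnorm, one_mul]
  let W : Submodule ℝ E := LinearMap.eqLocus (σ * τ) (p • 1 + q • J)
  have mem_W (y : E) : y ∈ W ↔ σ (τ y) = p • y + q • J y := Iff.rfl
  have hJW (y : E) (hy : y ∈ W) : J y ∈ W := by
    rw [mem_W] at hy ⊢
    rw [hτJ, map_neg, hσJ, neg_neg, hy, map_add, map_smul, map_smul]
  have hσW (y : E) (hy : y ∈ W) : σ y ∈ W := by
    rw [mem_W] at hy ⊢
    have hτσ : p • τ (σ y) + q • J (τ (σ y)) = y := by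
      have h := congrArg (fun z => τ (σ z)) hy
      simp only [hσ, hτ, map_add, map_smul, hσJ, hτJ, map_neg, neg_neg] at h
      exact h.symm
    -- As `p² + q² = 1`, the inverse of `p + qJ` is `p - qJ`.
    have hτσ' : τ (σ y) = p • y - q • J y := by
      have hJτσ := congrArg J hτσ
      rw [map_add, map_smul, map_smul, hJ] at hJτσ
      linear_combination (norm := module) p • hτσ - q • hJτσ - hpq • τ (σ y)
    rw [hτσ', map_sub, map_smul, map_smul, hσJ, smul_neg, sub_neg_eq_add]
  have hW : W ≠ ⊥ := W.ne_bot_iff.mpr ⟨x, hx, hx0⟩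
  obtain ⟨a, haW, ha0, hσa⟩ := exists_ne_zero_apply_eq_self hJ hσ hσJ hJW hσW hW
  refine ⟨a, ha0, hσa, p, -q, by rw [neg_sq, hpq], ?_⟩
  rw [← hσ (τ a), (mem_W a).mp haW, map_add, map_smul, map_smul, hσJ, hσa, smul_neg, neg_smul]

end Conjugations

section RootPairs

variable {g : Type*} [NormedAddCommGroup g] [InnerProductSpace ℝ g]
  {B : g →ₗ[ℝ] g →ₗ[ℝ] g} {t : Submodule ℝ g} {β γ x y u v : g}

/-- The real and imaginary parts of root vectors in the complexification: `IsRootPair B t β x y`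
says that `z = x - i y` satisfies `[η, z] = i ⟨β, η⟩ z` for all `η ∈ t`. The sign in `x - i y` makes
`y` the image of `x` under `rootComplexStructure B β`. -/
def IsRootPair (B : g →ₗ[ℝ] g →ₗ[ℝ] g) (t : Submodule ℝ g) (β x y : g) : Prop :=
  ∀ η ∈ t, B η x = ⟪β, η⟫ • y ∧ B η y = -(⟪β, η⟫ • x)

/-- The operator `|β|⁻² ad β`, which restricts to a complex structure on `g_β` when `β ∈ t` is
nonzero. It is defined on all of `g`, where it is skew-adjoint and anticommutes with `σ` and `τ`. -/
noncomputable def rootComplexStructure (B : g →ₗ[ℝ] g →ₗ[ℝ] g) (β : g) : Module.End ℝ g :=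
  (‖β‖ ^ 2)⁻¹ • B β

theorem rootComplexStructure_apply (x : g) :
    rootComplexStructure B β x = (‖β‖ ^ 2)⁻¹ • B β x := rfl

theorem bracket_eq_smul_rootComplexStructure (hβ : β ≠ 0) (x : g) :
    B β x = ‖β‖ ^ 2 • rootComplexStructure B β x := by
  rw [rootComplexStructure_apply, smul_inv_smul₀ (pow_ne_zero 2 (norm_ne_zero_iff.mpr hβ))]

theorem inner_bracket_left (hB : B.IsAlt) (hinv : ∀ x y z : g, ⟪B x y, z⟫ = ⟪x, B y z⟫)
    (x y z : g) : ⟪B x y, z⟫ = -⟪y, B x z⟫ := by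
  rw [← hB.neg y x, inner_neg_left, hinv]

theorem inner_rootComplexStructure_left (hB : B.IsAlt)
    (hinv : ∀ x y z : g, ⟪B x y, z⟫ = ⟪x, B y z⟫) (x y : g) :
    ⟪rootComplexStructure B β x, y⟫ = -⟪x, rootComplexStructure B β y⟫ := by
  simp only [rootComplexStructure_apply, real_inner_smul_left, real_inner_smul_right,
    inner_bracket_left hB hinv, mul_neg]

theorem map_rootComplexStructure {σ : g →ₗ[ℝ] g} (hσ : ∀ x y, σ (B x y) = B (σ x) (σ y))
    (hσβ : σ β = -β) (x : g) :
    σ (rootComplexStructure B β x) = -rootComplexStructure B β (σ x) := by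
  simp only [rootComplexStructure_apply, map_smul, hσ, hσβ, map_neg, LinearMap.neg_apply, smul_neg]

theorem map_mem_restrictedRootSpace {σ : g →ₗ[ℝ] g} (hσ : ∀ x y, σ (B x y) = B (σ x) (σ y))
    (hσt : ∀ η ∈ t, σ η = -η) (hx : x ∈ restrictedRootSpace B t β) :
    σ x ∈ restrictedRootSpace B t β := by
  intro η hη
  have bracket_map (y : g) : B η (σ y) = -σ (B η y) := by
    rw [hσ, hσt η hη, map_neg, LinearMap.neg_apply, neg_neg]
  rw [bracket_map, map_neg, bracket_map, neg_neg, hx η hη, map_smul]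

theorem bracket_eq_zero_of_inner_eq_zero (hB : B.IsAlt)
    (hinv : ∀ x y z : g, ⟪B x y, z⟫ = ⟪x, B y z⟫) (hx : x ∈ restrictedRootSpace B t β)
    {η : g} (hη : η ∈ t) (hβη : ⟪β, η⟫ = 0) : B η x = 0 := by
  have sq_eq_zero : B η (B η x) = 0 := by rw [hx η hη, hβη]; simp
  rw [← inner_self_eq_zero (𝕜 := ℝ), inner_bracket_left hB hinv, sq_eq_zero, inner_zero_right,
    neg_zero]

theorem bracket_eq_inner_smul_rootComplexStructure (hB : B.IsAlt)
    (hinv : ∀ x y z : g, ⟪B x y, z⟫ = ⟪x, B y z⟫) (hβt : β ∈ t) (hβ : β ≠ 0)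
    (hx : x ∈ restrictedRootSpace B t β) {η : g} (hη : η ∈ t) :
    B η x = ⟪β, η⟫ • rootComplexStructure B β x := by
  have hη' : η - (⟪β, η⟫ * (‖β‖ ^ 2)⁻¹) • β ∈ t := t.sub_mem hη (t.smul_mem _ hβt)
  have hβη' : ⟪β, η - (⟪β, η⟫ * (‖β‖ ^ 2)⁻¹) • β⟫ = 0 := by
    rw [inner_sub_right, real_inner_smul_right, real_inner_self_eq_norm_sq,
      inv_mul_cancel_right₀ (pow_ne_zero 2 (norm_ne_zero_iff.mpr hβ)), sub_self]
  have h := bracket_eq_zero_of_inner_eq_zero hB hinv hx hη' hβη'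
  rwa [map_sub, map_smul, LinearMap.sub_apply, LinearMap.smul_apply, sub_eq_zero, mul_smul] at h

theorem bracket_smul_add_smul (hB : B.IsAlt) (p q : ℝ) (x y : g) :
    B (p • x + q • y) (p • y - q • x) = (p ^ 2 + q ^ 2) • B x y := by
  simp only [map_add, map_sub, map_smul, LinearMap.add_apply, LinearMap.smul_apply,
    hB.self_eq_zero, ← hB.neg x y]
  module

namespace IsRootPair

theorem rotate (h : IsRootPair B t β x y) : IsRootPair B t β y (-x) := fun η hη =>
  ⟨by rw [(h η hη).2, smul_neg], by rw [map_neg, (h η hη).1]⟩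

theorem conj (h : IsRootPair B t β x y) : IsRootPair B t (-β) x (-y) := fun η hη =>
  ⟨by rw [(h η hη).1, inner_neg_left, neg_smul, smul_neg, neg_neg],
    by rw [map_neg, (h η hη).2, inner_neg_left, neg_smul]⟩

theorem left_mem (h : IsRootPair B t β x y) : x ∈ restrictedRootSpace B t β := fun η hη => by
  rw [(h η hη).1, map_smul, (h η hη).2, smul_neg, smul_smul, neg_smul, sq]

theorem right_mem (h : IsRootPair B t β x y) : y ∈ restrictedRootSpace B t β :=
  h.rotate.left_mem

theorem rootComplexStructure_eq (h : IsRootPair B t β x y) (hβt : β ∈ t) (hβ : β ≠ 0) :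
    rootComplexStructure B β x = y := by
  rw [rootComplexStructure_apply, (h β hβt).1, real_inner_self_eq_norm_sq,
    inv_smul_smul₀ (pow_ne_zero 2 (norm_ne_zero_iff.mpr hβ))]

theorem bracket (hjac : ∀ x y z : g, B x (B y z) = B (B x y) z + B y (B x z))
    (h : IsRootPair B t β x y) (h' : IsRootPair B t γ u v) :
    IsRootPair B t (β + γ) (B x u - B y v) (B x v + B y u) := by
  intro η hη
  simp only [map_sub, map_add, hjac η, (h η hη).1, (h η hη).2, (h' η hη).1, (h' η hη).2,
    map_smul, map_neg, LinearMap.smul_apply, LinearMap.neg_apply, inner_add_left]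
  constructor <;> module

theorem conj_bracket (hjac : ∀ x y z : g, B x (B y z) = B (B x y) z + B y (B x z))
    (h : IsRootPair B t β x y) (h' : IsRootPair B t (β + γ) u v) :
    IsRootPair B t γ (B x u + B y v) (B x v - B y u) := by
  simpa [← sub_eq_add_neg] using h.conj.bracket hjac h'

theorem bracket_bracket_eq_smul (hjac : ∀ x y z : g, B x (B y z) = B (B x y) z + B y (B x z))
    (h : IsRootPair B t β x y) (h' : IsRootPair B t γ u v) (hβt : β ∈ t) {c : ℝ}
    (hxy : B x y = c • β) (hβγ : restrictedRootSpace B t (β + γ) = ⊥) :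
    B x (B x u + B y v) - B y (B x v - B y u) = -(2 * c * ⟪γ, β⟫) • u := by
  have hre : B x u - B y v = 0 := (Submodule.eq_bot_iff _).mp hβγ _ (h.bracket hjac h').left_mem
  have him : B x v + B y u = 0 := (Submodule.eq_bot_iff _).mp hβγ _ (h.bracket hjac h').right_mem
  calc B x (B x u + B y v) - B y (B x v - B y u)
      = (2 : ℝ) • (B x (B y v) - B y (B x v)) := by
        rw [sub_eq_zero.mp hre, ← neg_eq_of_add_eq_zero_right him, sub_neg_eq_add, map_add, map_add]
        module
    _ = (2 : ℝ) • B (B x y) v := by rw [hjac x y v, add_sub_cancel_right]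
    _ = -(2 * c * ⟪γ, β⟫) • u := by
        rw [hxy, map_smul, LinearMap.smul_apply, (h' β hβt).2]
        module

theorem bracket_self_commutes (hB : B.IsAlt)
    (hjac : ∀ x y z : g, B x (B y z) = B (B x y) z + B y (B x z))
    (h : IsRootPair B t β x y) {η : g} (hη : η ∈ t) : B (B x y) η = 0 := by
  rw [← hB.neg, hjac, (h η hη).1, (h η hη).2, map_smul, LinearMap.smul_apply, map_neg, map_smul,
    hB.self_eq_zero, hB.self_eq_zero, smul_zero, neg_zero, add_zero, neg_zero]

theorem bracket_eq_norm_sq_smul (hB : B.IsAlt) (hinv : ∀ x y z : g, ⟪B x y, z⟫ = ⟪x, B y z⟫)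
    (h : IsRootPair B t β x y) (hβt : β ∈ t) (hxy : B x y ∈ t) : B x y = ‖x‖ ^ 2 • β := by
  have orthogonal (η : g) (hη : η ∈ t) : ⟪B x y - ‖x‖ ^ 2 • β, η⟫ = 0 := by
    rw [inner_sub_left, hinv, ← hB.neg, (h η hη).2, neg_neg, real_inner_smul_left,
      real_inner_smul_right, real_inner_self_eq_norm_sq, mul_comm, sub_self]
  exact sub_eq_zero.mp (inner_self_eq_zero.mp
    (orthogonal _ (t.sub_mem hxy (t.smul_mem _ hβt))))

end IsRootPair

theorem isRootPair_rootComplexStructure (hB : B.IsAlt)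
    (hinv : ∀ x y z : g, ⟪B x y, z⟫ = ⟪x, B y z⟫) (hβt : β ∈ t) (hβ : β ≠ 0)
    (hx : x ∈ restrictedRootSpace B t β) :
    IsRootPair B t β x (rootComplexStructure B β x) := by
  intro η hη
  have bracket_left := bracket_eq_inner_smul_rootComplexStructure hB hinv hβt hβ hx hη
  refine ⟨bracket_left, ?_⟩
  -- Polarize the quadratic identity defining `g_β` at `η` and `β`.
  have polarized : B η (B β x) + B β (B η x) = -(2 * ⟪β, η⟫ * ‖β‖ ^ 2) • x := by
    have h := hx (η + β) (t.add_mem hη hβt)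
    simp only [map_add, LinearMap.add_apply, hx η hη, hx β hβt, inner_add_right,
      real_inner_self_eq_norm_sq] at h
    linear_combination (norm := module) h
  have bracket_bracket : B β (B η x) = -(⟪β, η⟫ * ‖β‖ ^ 2) • x := by
    rw [bracket_left, map_smul, rootComplexStructure_apply, map_smul, hx β hβt,
      real_inner_self_eq_norm_sq, smul_smul, smul_smul]
    congr 1
    field_simp
  have h : ‖β‖ ^ 2 • B η (rootComplexStructure B β x) = ‖β‖ ^ 2 • -(⟪β, η⟫ • x) := by
    rw [← map_smul, ← bracket_eq_smul_rootComplexStructure hβ]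
    linear_combination (norm := module) polarized - bracket_bracket
  exact smul_right_injective g (pow_ne_zero 2 (norm_ne_zero_iff.mpr hβ)) h

theorem restrictedRootSpace_add_le_map (hB : B.IsAlt)
    (hjac : ∀ x y z : g, B x (B y z) = B (B x y) z + B y (B x z))
    (hinv : ∀ x y z : g, ⟪B x y, z⟫ = ⟪x, B y z⟫) (hβt : β ∈ t) (hγt : γ ∈ t) (hγ : γ ≠ 0)
    (hβγ : ⟪β + γ, β⟫ ≠ 0) (h : IsRootPair B t β x y) {c : ℝ} (hc : c ≠ 0) (hxy : B x y = c • β)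
    (hbot : restrictedRootSpace B t (β + (β + γ)) = ⊥) :
    restrictedRootSpace B t (β + γ) ≤
      (restrictedRootSpace B t γ).map (B x - B y ∘ₗ rootComplexStructure B γ) := by
  intro u hu
  have hβγ0 : β + γ ≠ 0 := fun h0 => hβγ (by rw [h0, inner_zero_left])
  have h' := isRootPair_rootComplexStructure hB hinv (t.add_mem hβt hγt) hβγ0 hu
  have hv := h.conj_bracket hjac h'
  have hk : -(2 * c * ⟪β + γ, β⟫) ≠ 0 := neg_ne_zero.mpr (mul_ne_zero (by simpa) hβγ)
  rw [← Submodule.smul_mem_iff _ hk, ← h.bracket_bracket_eq_smul hjac h' hβt hxy hbot,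
    ← hv.rootComplexStructure_eq hγt hγ]
  exact Submodule.mem_map_of_mem hv.left_mem

theorem exists_isRootPair_bracket_mem [FiniteDimensional ℝ (restrictedRootSpace B t β)]
    (hB : B.IsAlt) (hjac : ∀ x y z : g, B x (B y z) = B (B x y) z + B y (B x z))
    (hinv : ∀ x y z : g, ⟪B x y, z⟫ = ⟪x, B y z⟫) {σ τ : g →ₗ[ℝ] g}
    (hσinv : ∀ x, σ (σ x) = x) (hτinv : ∀ x, τ (τ x) = x)
    (hσaut : ∀ x y, σ (B x y) = B (σ x) (σ y)) (hτaut : ∀ x y, τ (B x y) = B (τ x) (τ y))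
    (hσnorm : ∀ x, ‖σ x‖ = ‖x‖) (hτnorm : ∀ x, ‖τ x‖ = ‖x‖)
    (hσt : ∀ η ∈ t, σ η = -η) (hτt : ∀ η ∈ t, τ η = -η)
    (htmax : ∀ x : g, σ x = -x → τ x = -x → (∀ η ∈ t, B x η = 0) → x ∈ t)
    (hβt : β ∈ t) (hβ : β ≠ 0) (hne : restrictedRootSpace B t β ≠ ⊥) :
    ∃ a a' : g, a ≠ 0 ∧ IsRootPair B t β a a' ∧ B a a' ∈ t := by
  have pair (x : g) (hx : x ∈ restrictedRootSpace B t β) :=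
    isRootPair_rootComplexStructure hB hinv hβt hβ hx
  have hσJ := map_rootComplexStructure hσaut (hσt β hβt)
  have hτJ := map_rootComplexStructure hτaut (hτt β hβt)
  have : Nontrivial (restrictedRootSpace B t β) := Submodule.nontrivial_iff_ne_bot.mpr hne
  obtain ⟨⟨a, ha⟩, ha0, hσa, p, q, hpq, hτa⟩ :=
    exists_common_eigenvector_of_conjugations
      (J := (rootComplexStructure B β).restrict fun x hx => (pair x hx).right_mem)
      (σ := σ.restrict fun x => map_mem_restrictedRootSpace hσaut hσt)
      (τ := τ.restrict fun x => map_mem_restrictedRootSpace hτaut hτt)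
      (fun x => Subtype.ext ((pair x x.2).rotate.rootComplexStructure_eq hβt hβ))
      (fun x y => inner_rootComplexStructure_left hB hinv x.1 y.1)
      (fun x => Subtype.ext (hσinv x)) (fun x => Subtype.ext (hτinv x))
      (fun x => Subtype.ext (hσJ x)) (fun x => Subtype.ext (hτJ x))
      (fun x => hσnorm x) (fun x => hτnorm x)
  have ha' := pair a ha
  set a' := rootComplexStructure B β a
  replace hσa : σ a = a := congrArg Subtype.val hσa
  replace hτa : τ a = p • a + q • a' := congrArg Subtype.val hτa
  have hτa' : τ a' = -(p • a' - q • a) := by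
    rw [hτJ, hτa, map_add, map_smul, map_smul, ha'.rotate.rootComplexStructure_eq hβt hβ, smul_neg,
      sub_eq_add_neg]
  refine ⟨a, a', fun h => ha0 (Subtype.ext h), ha', htmax _ ?_ ?_ fun η hη =>
    ha'.bracket_self_commutes hB hjac hη⟩
  · rw [hσaut, hσJ, hσa, map_neg]
  · rw [hτaut, hτa, hτa', map_neg, bracket_smul_add_smul hB, hpq, one_smul]

end RootPairs

theorem finrank_rootSpace_two_smul_lt_general
    {g : Type*} [NormedAddCommGroup g] [InnerProductSpace ℝ g]
    (B : g →ₗ[ℝ] g →ₗ[ℝ] g)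
    (halt : ∀ x : g, B x x = 0)
    (hjac : ∀ x y z : g, B x (B y z) = B (B x y) z + B y (B x z))
    (hinv : ∀ x y z : g, ⟪B x y, z⟫ = ⟪x, B y z⟫)
    (σ τ : g →ₗ[ℝ] g)
    (hσinv : ∀ x : g, σ (σ x) = x) (hτinv : ∀ x : g, τ (τ x) = x)
    (hσaut : ∀ x y : g, σ (B x y) = B (σ x) (σ y))
    (hτaut : ∀ x y : g, τ (B x y) = B (τ x) (τ y))
    (hσort : ∀ x y : g, ⟪σ x, σ y⟫ = ⟪x, y⟫)
    (hτort : ∀ x y : g, ⟪τ x, τ y⟫ = ⟪x, y⟫)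
    (t : Submodule ℝ g)
    (htmp : ∀ x ∈ t, σ x = -x ∧ τ x = -x)
    (htmax : ∀ x : g, σ x = -x → τ x = -x → (∀ η ∈ t, B x η = 0) → x ∈ t)
    (α : g) [FiniteDimensional ℝ (restrictedRootSpace B t α)] (hαt : α ∈ t) (hα : α ≠ 0)
    (h1 : restrictedRootSpace B t α ≠ ⊥)
    (h3 : restrictedRootSpace B t ((3 : ℝ) • α) = ⊥) :
    Module.finrank ℝ (restrictedRootSpace B t ((2 : ℝ) • α)) <
      Module.finrank ℝ (restrictedRootSpace B t α) := by
  have norm_eq {ρ : g →ₗ[ℝ] g} (hρ : ∀ x y, ⟪ρ x, ρ y⟫ = ⟪x, y⟫) (x : g) : ‖ρ x‖ = ‖x‖ := by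
    rw [norm_eq_sqrt_real_inner, hρ, ← norm_eq_sqrt_real_inner]
  obtain ⟨a, a', ha0, ha, haa'⟩ := exists_isRootPair_bracket_mem halt hjac hinv hσinv hτinv
    hσaut hτaut (norm_eq hσort) (norm_eq hτort) (fun η hη => (htmp η hη).1)
    (fun η hη => (htmp η hη).2) htmax hαt hα h1
  have hbracket : B a a' = ‖a‖ ^ 2 • α := ha.bracket_eq_norm_sq_smul halt hinv hαt haa'
  have hαα : ⟪α + α, α⟫ ≠ 0 := by simpa [inner_add_left] using hα
  have h3' : restrictedRootSpace B t (α + (α + α)) = ⊥ := by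
    rw [← h3]
    congr 1
    module
  have hle := restrictedRootSpace_add_le_map halt hjac hinv hαt hαt hα hαα ha
    (pow_ne_zero 2 (norm_ne_zero_iff.mpr ha0)) hbracket h3'
  have hkills : (B a - B a' ∘ₗ rootComplexStructure B α) a = 0 := by
    simp [ha.rootComplexStructure_eq hαt hα, halt]
  rw [two_smul]
  exact finrank_lt_finrank_of_le_map hle ha.left_mem ha0 hkills

/-- Lemma 7.1: for a real Lie algebra `g` (bracket `B`) with an invariant inner product,
two inner-product-preserving involutive automorphisms `σ`, `τ` with `(-1)`-eigenspaces
`m`, `p`, and a maximal abelian subspace `t` of `m ∩ p`, if `α ≠ 0` is such that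
`g_α ≠ 0`, `g_{2α} ≠ 0` and `g_{3α} = 0`, then `dim g_α > dim g_{2α}`. -/
theorem finrank_rootSpace_two_smul_lt
    {g : Type*} [NormedAddCommGroup g] [InnerProductSpace ℝ g] [FiniteDimensional ℝ g]
    (B : g →ₗ[ℝ] g →ₗ[ℝ] g)
    (halt : ∀ x : g, B x x = 0)
    (hjac : ∀ x y z : g, B x (B y z) = B (B x y) z + B y (B x z))
    (hinv : ∀ x y z : g, ⟪B x y, z⟫ = ⟪x, B y z⟫)
    (σ τ : g →ₗ[ℝ] g)
    (hσinv : ∀ x : g, σ (σ x) = x) (hτinv : ∀ x : g, τ (τ x) = x)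
    (hσaut : ∀ x y : g, σ (B x y) = B (σ x) (σ y))
    (hτaut : ∀ x y : g, τ (B x y) = B (τ x) (τ y))
    (hσort : ∀ x y : g, ⟪σ x, σ y⟫ = ⟪x, y⟫)
    (hτort : ∀ x y : g, ⟪τ x, τ y⟫ = ⟪x, y⟫)
    (t : Submodule ℝ g)
    (htmp : ∀ x ∈ t, σ x = -x ∧ τ x = -x)
    (htab : ∀ η ∈ t, ∀ η' ∈ t, B η η' = 0)
    (htmax : ∀ x : g, σ x = -x → τ x = -x → (∀ η ∈ t, B x η = 0) → x ∈ t)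
    (α : g) (hαt : α ∈ t) (hα : α ≠ 0)
    (h1 : restrictedRootSpace B t α ≠ ⊥)
    (h2 : restrictedRootSpace B t ((2 : ℝ) • α) ≠ ⊥)
    (h3 : restrictedRootSpace B t ((3 : ℝ) • α) = ⊥) :
    Module.finrank ℝ (restrictedRootSpace B t ((2 : ℝ) • α)) <
      Module.finrank ℝ (restrictedRootSpace B t α) := by
  exact finrank_rootSpace_two_smul_lt_general B halt hjac hinv σ τ hσinv hτinv hσaut hτaut
    hσort hτort t htmp htmax α hαt hα h1 h3
end

section
/- Let V be a finite-dimensional real inner product space and M a finite multiset of vectors of V. Then M is negation-invariant if and only if for every ξ ∈ V the multiset of real numbers {⟨v,ξ⟩ : v ∈ M} (taken with multiplicities) is negation-invariant. -/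
open scoped RealInnerProductSpace

/-!
A vector space over an infinite division ring is not a finite union of proper subspaces, so some
`ξ` lies in no equalizer of two distinct members of a given finite set of linear maps. Evaluation
at such a `ξ` is injective on that set. Applied to the functionals `±⟪v, ·⟫` with `v ∈ M`, this
shows that a single `ξ` already detects whether `M` is negation-invariant.
-/

theorem multiset_map_inj_of_injOn {α β : Type*} {f : α → β} {A : Set α} (hf : A.InjOn f)
    {s t : Multiset α} (hs : ∀ a ∈ s, a ∈ A) (ht : ∀ a ∈ t, a ∈ A) :
    s.map f = t.map f ↔ s = t := by
  lift s to Multiset A using hs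
  lift t to Multiset A using ht
  have hinj : Function.Injective fun a : A ↦ f a := Set.injOn_iff_injective.mp hf
  simp only [Multiset.map_map, Function.comp_def]
  rw [Multiset.map_eq_map hinj, Multiset.map_eq_map Subtype.val_injective]

section LinearMap

variable {K W U : Type*} [DivisionRing K] [Infinite K] [AddCommGroup W] [Module K W]

theorem exists_injOn_linearMap_apply [AddCommMonoid U] [Module K U] {A : Set (W →ₗ[K] U)}
    (hA : A.Finite) : ∃ ξ : W, A.InjOn fun f ↦ f ξ := by
  have : Finite A.offDiag := hA.offDiag
  have hcover : ⋃ p : A.offDiag, (LinearMap.eqLocus p.1.1 p.1.2 : Set W) ≠ Set.univ := by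
    intro h
    obtain ⟨⟨⟨f, g⟩, _, _, hfg⟩, htop⟩ := Subspace.exists_eq_top_of_iUnion_eq_univ h
    exact hfg (LinearMap.eqLocus_eq_top.mp htop)
  obtain ⟨ξ, hξ⟩ := (Set.ne_univ_iff_exists_notMem _).mp hcover
  refine ⟨ξ, fun f hf g hg hfg ↦ ?_⟩
  by_contra hne
  exact hξ (Set.mem_iUnion.mpr ⟨⟨(f, g), hf, hg, hne⟩, hfg⟩)

theorem multiset_linearMap_eq_iff_forall_map_apply_eq [AddCommMonoid U] [Module K U]
    {s t : Multiset (W →ₗ[K] U)} :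
    s = t ↔ ∀ ξ : W, s.map (fun f ↦ f ξ) = t.map fun f ↦ f ξ := by
  refine ⟨fun h _ ↦ h ▸ rfl, fun h ↦ ?_⟩
  classical
  obtain ⟨ξ, hξ⟩ := exists_injOn_linearMap_apply (s + t).toFinset.finite_toSet
  refine (multiset_map_inj_of_injOn hξ (fun f hf ↦ ?_) fun f hf ↦ ?_).mp (h ξ) <;> simp [hf]

theorem multiset_neg_invariant_iff_inner_neg_invariant_general {V : Type*} [AddCommGroup V]
    [AddCommGroup U] [Module K U] (φ : V →+ W →ₗ[K] U) (hφ : Function.Injective φ)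
    (M : Multiset V) :
    M.map (fun v ↦ -v) = M ↔
      ∀ ξ : W, (M.map fun v ↦ φ v ξ).map (fun r ↦ -r) = M.map fun v ↦ φ v ξ := by
  rw [← Multiset.map_eq_map hφ, multiset_linearMap_eq_iff_forall_map_apply_eq]
  simp only [Multiset.map_map, Function.comp_def, map_neg, LinearMap.neg_apply]

end LinearMap

theorem innerₗ_injective {V : Type*} [NormedAddCommGroup V] [InnerProductSpace ℝ V] :
    Function.Injective (innerₗ V) :=
  fun _ _ h ↦ ext_inner_right ℝ (LinearMap.congr_fun h)

/-- A finite multiset `M` of vectors of a finite-dimensional real inner product space is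
negation-invariant if and only if, for every `ξ`, the multiset of inner products
`⟨v, ξ⟩` (`v ∈ M`, with multiplicities) is negation-invariant. -/
theorem multiset_neg_invariant_iff_inner_neg_invariant
    {V : Type*} [NormedAddCommGroup V] [InnerProductSpace ℝ V] [FiniteDimensional ℝ V]
    (M : Multiset V) :
    M.map (fun v => -v) = M ↔
      ∀ ξ : V,
        (M.map (fun v => (⟪v, ξ⟫ : ℝ))).map (fun r => -r) =
          M.map (fun v => (⟪v, ξ⟫ : ℝ)) :=
  multiset_neg_invariant_iff_inner_neg_invariant_general (innerₗ V).toAddMonoidHom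
    innerₗ_injective M
end

section
/- Let V be a finite-dimensional real inner product space and Δ⁺ a finite set of nonzero vectors of V that is reduced in the sense that whenever α, α' ∈ Δ⁺ and α' = c·α for some real number c, then α' = α. For each α ∈ Δ⁺ let Θ_α be a finite multiset of real numbers none of whose elements is an integer multiple of π/2. Then the following are equivalent: (1) for every v ∈ V, the total number (with multiplicity) of pairs (α, θ) with α ∈ Δ⁺, θ ∈ Θ_α and (cot θ)·α = v equals the total number of such pairs with (cot θ)·α = −v; (2) for every nonzero v ∈ V, the total number (with multiplicity) of pairs (α, θ) with α ∈ Δ⁺, θ ∈ Θ_α for which there exists an integer m with (θ+mπ)⁻¹·α = v equals the total number of such pairs for which there exists an integer m with (θ+mπ)⁻¹·α = −v. -/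
open Real
open scoped Classical RealInnerProductSpace

/-!
Members of a reduced set span lines that meet only at `0`, so each condition can be tested one root
at a time and becomes the evenness of a function counting scalars. For `sin θ ≠ 0`, a real `x` lies
in `θ + πℤ` iff `sin x ≠ 0` and `cot x = cot θ`; hence the count of inverse translates at `c` is the
count of cotangents at `cot c⁻¹` (and `0` if `sin c⁻¹ = 0`). Evenness then transfers in both
directions because the cotangent is odd and takes every real value.
-/

section Cotangent

theorem cot_neg (x : ℝ) : cot (-x) = -cot x := by
  simp only [cot_eq_cos_div_sin, cos_neg, sin_neg, div_neg]

theorem cot_eq_cot_iff {x y : ℝ} (hx : sin x ≠ 0) (hy : sin y ≠ 0) :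
    cot x = cot y ↔ ∃ m : ℤ, y + m * π = x := by
  have sub_form : cot x = cot y ↔ sin (x - y) = 0 := by
    rw [cot_eq_cos_div_sin, cot_eq_cos_div_sin, div_eq_div_iff hx hy, sin_sub, sub_eq_zero,
      eq_comm, mul_comm (cos y)]
  simp only [sub_form, sin_eq_zero_iff, eq_sub_iff_add_eq']

theorem exists_cot_eq (c : ℝ) : ∃ x, sin x ≠ 0 ∧ cot x = c := by
  refine ⟨π / 2 - arctan c, ?_, ?_⟩
  · rw [sin_pi_div_two_sub]
    exact (cos_arctan_pos c).ne'
  · rw [cot_eq_cos_div_sin, cos_pi_div_two_sub, sin_pi_div_two_sub, ← tan_eq_sin_div_cos,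
      tan_arctan]

theorem sin_add_int_mul_pi_eq_zero_iff (x : ℝ) (m : ℤ) : sin (x + m * π) = 0 ↔ sin x = 0 := by
  rw [sin_add_int_mul_pi, mul_eq_zero, or_iff_right (zpow_ne_zero m (by norm_num))]

/-- The scalars `(θ + mπ)⁻¹`, `m ∈ ℤ`, by which a root is multiplied in the path condition. -/
def inverseTranslates (θ : ℝ) : Set ℝ :=
  Set.range fun m : ℤ => (θ + m * π)⁻¹

theorem mem_inverseTranslates_iff {θ c : ℝ} (hθ : sin θ ≠ 0) :
    c ∈ inverseTranslates θ ↔ sin c⁻¹ ≠ 0 ∧ cot c⁻¹ = cot θ := by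
  simp only [inverseTranslates, Set.mem_range, inv_eq_iff_eq_inv]
  constructor
  · rintro ⟨m, hm⟩
    have sin_ne : sin c⁻¹ ≠ 0 := by rwa [← hm, Ne, sin_add_int_mul_pi_eq_zero_iff]
    exact ⟨sin_ne, (cot_eq_cot_iff sin_ne hθ).2 ⟨m, hm⟩⟩
  · rintro ⟨sin_ne, cot_eq⟩
    exact (cot_eq_cot_iff sin_ne hθ).1 cot_eq

theorem countP_mem_inverseTranslates {s : Multiset ℝ} (hs : ∀ θ ∈ s, sin θ ≠ 0) (c : ℝ) :
    s.countP (c ∈ inverseTranslates ·) =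
      if sin c⁻¹ = 0 then 0 else s.countP (cot c⁻¹ = cot ·) := by
  split_ifs with sin_eq
  · exact Multiset.countP_eq_zero.2 fun θ hθ hc =>
      ((mem_inverseTranslates_iff (hs θ hθ)).1 hc).1 sin_eq
  · exact Multiset.countP_congr rfl fun θ hθ => propext <|
      (mem_inverseTranslates_iff (hs θ hθ)).trans (and_iff_right sin_eq)

theorem even_countP_cot_iff {s : Multiset ℝ} (hs : ∀ θ ∈ s, sin θ ≠ 0) :
    Function.Even (fun c : ℝ => s.countP (c = cot ·)) ↔
      Function.Even (fun c : ℝ => s.countP (c ∈ inverseTranslates ·)) := by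
  simp only [Function.Even, countP_mem_inverseTranslates hs, inv_neg, sin_neg, cot_neg,
    neg_eq_zero]
  constructor
  · intro even_cot c
    rw [even_cot]
  · intro even_translates c
    obtain ⟨x, sin_ne, rfl⟩ := exists_cot_eq c
    simpa only [inv_inv, if_neg sin_ne] using even_translates x⁻¹

end Cotangent

section Roots

variable {V : Type*} [AddCommGroup V]

theorem even_iff_forall_ne_zero {M : Type*} {f : V → M} :
    Function.Even f ↔ ∀ v, v ≠ 0 → f v = f (-v) := by
  refine ⟨fun hf v _ => (hf v).symm, fun hf v => ?_⟩
  rcases eq_or_ne v 0 with rfl | hv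
  · rw [neg_zero]
  · exact (hf v hv).symm

theorem pairwiseDisjoint_span_singleton {K : Type*} [DivisionRing K] [Module K V] {Δ : Set V}
    (hred : ∀ α ∈ Δ, ∀ α' ∈ Δ, ∀ c : K, α' = c • α → α' = α) :
    Δ.PairwiseDisjoint fun α => Submodule.span K {α} := by
  intro α hα β hβ hne
  refine Submodule.disjoint_span_singleton.2 fun hmem => ?_
  obtain ⟨c, hc⟩ := Submodule.mem_span_singleton.1 hmem
  exact absurd (hred α hα β hβ c hc.symm).symm hne

variable {R : Type*} [Ring R] [Module R V]

theorem even_sum_iff {ι M : Type*} [AddCommMonoid M] {s : Finset ι} {p : ι → Submodule R V}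
    (hp : (s : Set ι).PairwiseDisjoint p) {f : ι → V → M} (hf : ∀ i ∈ s, ∀ v ∉ p i, f i v = 0) :
    Function.Even (fun v => ∑ i ∈ s, f i v) ↔ ∀ i ∈ s, Function.Even (f i) := by
  have sum_eq {i : ι} (hi : i ∈ s) {v : V} (hv : v ≠ 0) (hvi : v ∈ p i) :
      ∑ j ∈ s, f j v = f i v :=
    Finset.sum_eq_single_of_mem i hi fun j hj hji => hf j hj v fun hvj =>
      hv (Submodule.disjoint_def.1 (hp hj hi hji) v hvj hvi)
  constructor
  · intro even_sum i hi
    refine even_iff_forall_ne_zero.2 fun v hv => ?_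
    by_cases hvi : v ∈ p i
    · rw [← sum_eq hi hv hvi, ← sum_eq hi (neg_ne_zero.2 hv) ((p i).neg_mem hvi)]
      exact (even_sum v).symm
    · rw [hf i hi v hvi, hf i hi (-v) (mt (p i).neg_mem_iff.1 hvi)]
  · exact fun even_f v => Finset.sum_congr rfl fun i hi => even_f i hi v

theorem even_iff_even_smul {M : Type*} [Zero M] {α : V} {f : V → M}
    (hf : ∀ v ∉ Submodule.span R {α}, f v = 0) :
    Function.Even f ↔ Function.Even fun c : R => f (c • α) := by
  refine ⟨fun even_f c => by simpa only [neg_smul] using even_f (c • α), fun even_smul v => ?_⟩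
  by_cases hv : v ∈ Submodule.span R {α}
  · obtain ⟨c, rfl⟩ := Submodule.mem_span_singleton.1 hv
    simpa only [neg_smul] using even_smul c
  · rw [hf v hv, hf (-v) (mt (Submodule.neg_mem_iff _).1 hv)]

/-- The number, with multiplicity, of pairs `(α, θ)` with `α ∈ Δ` and `θ ∈ Θ α` such that `v` is a
multiple of `α` by a scalar in `C θ`. A pair counts once, however many such scalars there are. -/
noncomputable def multipleCount {ι : Type*} (Δ : Finset V) (Θ : V → Multiset ι) (C : ι → Set R)
    (v : V) : ℕ :=
  ∑ α ∈ Δ, (Θ α).countP fun θ => ∃ c ∈ C θ, c • α = v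

theorem even_multipleCount_iff [IsDomain R] [Module.IsTorsionFree R V] {ι : Type*} {Δ : Finset V}
    (hΔ : (Δ : Set V).PairwiseDisjoint fun α => Submodule.span R {α}) (Θ : V → Multiset ι)
    (C : ι → Set R) :
    Function.Even (multipleCount Δ Θ C) ↔
      ∀ α ∈ Δ, α ≠ 0 → Function.Even fun c : R => (Θ α).countP (c ∈ C ·) := by
  have off_line (α : V) (v : V) (hv : v ∉ Submodule.span R {α}) :
      (Θ α).countP (fun θ => ∃ c ∈ C θ, c • α = v) = 0 :=
    Multiset.countP_eq_zero.2 fun θ _ ⟨c, _, hc⟩ => hv (Submodule.mem_span_singleton.2 ⟨c, hc⟩)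
  refine (even_sum_iff hΔ fun α _ => off_line α).trans (forall₂_congr fun α _ => ?_)
  rw [even_iff_even_smul (off_line α)]
  rcases eq_or_ne α 0 with rfl | hα
  · simp only [smul_zero, Function.Even, implies_true, ne_eq, not_true_eq_false, false_implies]
  · simp only [(smul_left_injective R hα).eq_iff, exists_eq_right, ne_eq, hα, not_false_eq_true,
      forall_const]

end Roots

theorem reduced_austere_iff_path_austere_general {V : Type*} [AddCommGroup V] [Module ℝ V]
    (Δ : Finset V) (hred : ∀ α ∈ Δ, ∀ α' ∈ Δ, ∀ c : ℝ, α' = c • α → α' = α)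
    (Θ : V → Multiset ℝ) (hΘ : ∀ α ∈ Δ, ∀ θ ∈ Θ α, ∀ k : ℤ, θ ≠ k * π) :
    ((∀ v : V,
        (∑ α ∈ Δ, (Θ α).countP (fun θ => Real.cot θ • α = v)) =
          ∑ α ∈ Δ, (Θ α).countP (fun θ => Real.cot θ • α = -v)) ↔
      (∀ v : V, v ≠ 0 →
        (∑ α ∈ Δ, (Θ α).countP (fun θ => ∃ m : ℤ, (θ + m * π)⁻¹ • α = v)) =
          ∑ α ∈ Δ, (Θ α).countP (fun θ => ∃ m : ℤ, (θ + m * π)⁻¹ • α = -v))) := by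
  have lines_disjoint := pairwiseDisjoint_span_singleton (Δ := (Δ : Set V)) hred
  have sin_ne (α : V) (hα : α ∈ Δ) (θ : ℝ) (hθ : θ ∈ Θ α) : sin θ ≠ 0 :=
    sin_ne_zero_iff.2 fun k => (hΘ α hα θ hθ k).symm
  calc
    _ ↔ Function.Even (multipleCount Δ Θ fun θ => {cot θ}) := by
      simp only [Function.Even, multipleCount, Set.mem_singleton_iff, exists_eq_left,
        eq_comm (a := ∑ α ∈ Δ, (Θ α).countP fun θ => cot θ • α = -_)]
    _ ↔ Function.Even (multipleCount Δ Θ inverseTranslates) := by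
      rw [even_multipleCount_iff lines_disjoint, even_multipleCount_iff lines_disjoint]
      exact forall₃_congr fun α hα _ => even_countP_cot_iff (sin_ne α hα)
    _ ↔ _ := by
      simp only [even_iff_forall_ne_zero, multipleCount, inverseTranslates, Set.exists_range_iff]

/-- Combinatorial core of Theorem 6.1 (Theorem I). Let `Δ` be a finite set of nonzero
vectors which is reduced (proportional members are equal), and for `α ∈ Δ` let `Θ α` be
a finite multiset of reals avoiding `(π/2)ℤ`. Then the multiset of vectors
`cot θ • α` (`α ∈ Δ`, `θ ∈ Θ α`) is symmetric under negation if and only if, for every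
nonzero `v`, the number of pairs `(α, θ)` admitting an integer `m` with
`(θ+mπ)⁻¹ • α = v` equals the number of those with `(θ+mπ)⁻¹ • α = -v`. -/
theorem reduced_austere_iff_path_austere
    {V : Type*} [NormedAddCommGroup V] [InnerProductSpace ℝ V] [FiniteDimensional ℝ V]
    (Δ : Finset V) (hne : ∀ α ∈ Δ, α ≠ 0)
    (hred : ∀ α ∈ Δ, ∀ α' ∈ Δ, ∀ c : ℝ, α' = c • α → α' = α)
    (Θ : V → Multiset ℝ)
    (hΘ : ∀ α ∈ Δ, ∀ θ ∈ Θ α, ∀ k : ℤ, θ ≠ k * (π / 2)) :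
    ((∀ v : V,
        (∑ α ∈ Δ, (Θ α).countP (fun θ => Real.cot θ • α = v)) =
          ∑ α ∈ Δ, (Θ α).countP (fun θ => Real.cot θ • α = -v)) ↔
      (∀ v : V, v ≠ 0 →
        (∑ α ∈ Δ, (Θ α).countP (fun θ => ∃ m : ℤ, (θ + m * π)⁻¹ • α = v)) =
          ∑ α ∈ Δ, (Θ α).countP (fun θ => ∃ m : ℤ, (θ + m * π)⁻¹ • α = -v))) :=
  reduced_austere_iff_path_austere_general Δ hred Θ fun α hα θ hθ k hk =>
    hΘ α hα θ hθ (2 * k) (by push_cast; linarith)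
end

section
/- Let V be a finite-dimensional real inner product space and Δ⁺ a finite set of nonzero vectors of V such that whenever α, α' ∈ Δ⁺ and α' = c·α for some real number c, then c ∈ {1, 2, 1/2}. Let m : Δ⁺ → ℕ satisfy m(α) ≥ 1 for all α ∈ Δ⁺, and m(α) > m(2α) whenever both α and 2α lie in Δ⁺. Fix w ∈ V. Then the following are equivalent: (i) the finite multiset consisting of the vectors cot(⟨α,w⟩)·α, each taken with multiplicity m(α), over all α ∈ Δ⁺ with ⟨α,w⟩ ∉ πℤ, is negation-invariant; (ii) ⟨α,w⟩ ∈ (π/2)ℤ for every α ∈ Δ⁺; (iii) for every nonzero v ∈ V, the sum over α ∈ Δ⁺ with ⟨α,w⟩ ∉ πℤ of m(α) times the indicator of 'there exists an integer m with (⟨α,w⟩+mπ)⁻¹·α = v' equals the corresponding sum with v replaced by −v. -/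
open Real
open scoped Classical RealInnerProductSpace

/-!
Call a root `α` indivisible if `α / 2` is not a root. Both (i) and (iii) say that the weighted
number of roots `α` with `v ∈ S α • α` is an even function of `v`, where `S α` is
`{cot ⟨α, w⟩}` or `{(⟨α, w⟩ + kπ)⁻¹ | k ∈ ℤ}`, and in both cases (ii) says that each `S α` is
symmetric. Suppose `α` is indivisible and `c ∈ S α` but `-c ∉ S α`. Then `α` contributes `m α` to
the count at `c • α`, while only `2α` can contribute to the count at `-c • α`, and
`m (2α) < m α`. So evenness makes `S α` symmetric for indivisible `α`, and the remaining roots are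
doubles of indivisible ones.
-/

section RootMultiplicity

variable {K V : Type*} [Field K] [AddCommGroup V] [Module K V]

variable (K) in
/-- `m` is a positive multiplicity function, strictly decreasing along `α ↦ 2α`, on a finite set
`Δ` whose proportional members differ by a factor `1`, `2` or `1 / 2`: the properties of the
multiplicities of the positive restricted roots of a symmetric space. Only the values of `m` on
`Δ` matter. -/
structure IsRootMultiplicity (Δ : Finset V) (m : V → ℕ) : Prop where
  eq_of_eq_smul : ∀ α ∈ Δ, ∀ β ∈ Δ, ∀ c : K, β = c • α → c = 1 ∨ c = 2 ∨ c = 1 / 2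
  one_le : ∀ α ∈ Δ, 1 ≤ m α
  two_smul_lt : ∀ α ∈ Δ, (2 : K) • α ∈ Δ → m ((2 : K) • α) < m α

/-- The number, weighted by `m`, of the `α ∈ Δ` for which `v ∈ S α • α`. For `S α` the set of
coefficients of the principal curvatures belonging to the root `α`, this is the multiplicity of the
principal curvature `v`. -/
noncomputable def weightedCount (Δ : Finset V) (m : V → ℕ) (S : V → Set K) (v : V) : ℕ :=
  ∑ α ∈ Δ with ∃ c ∈ S α, c • α = v, m α

namespace IsRootMultiplicity

variable {Δ : Finset V} {m : V → ℕ} {α β : V}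

lemma mono (h : IsRootMultiplicity K Δ m) {F : Finset V} (hF : F ⊆ Δ) :
    IsRootMultiplicity K F m where
  eq_of_eq_smul α hα β hβ := h.eq_of_eq_smul α (hF hα) β (hF hβ)
  one_le α hα := h.one_le α (hF hα)
  two_smul_lt α hα hα₂ := h.two_smul_lt α (hF hα) (hF hα₂)

lemma eq_two_smul_of_half_smul_notMem (h : IsRootMultiplicity K Δ m) (hα : α ∈ Δ)
    (hα_half : (1 / 2 : K) • α ∉ Δ) (hβ : β ∈ Δ) {c : K} (hc : β = c • α) (hne : β ≠ α) :
    β = (2 : K) • α := by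
  rcases h.eq_of_eq_smul α hα β hβ c hc with rfl | rfl | rfl
  · exact absurd (hc.trans (one_smul K α)) hne
  · exact hc
  · exact absurd (hc ▸ hβ) hα_half

lemma sum_lt_of_forall_eq_two_smul (h : IsRootMultiplicity K Δ m) (hα : α ∈ Δ) {G : Finset V}
    (hG : G ⊆ Δ) (heq : ∀ β ∈ G, β = (2 : K) • α) : ∑ β ∈ G, m β < m α := by
  rcases Finset.subset_singleton_iff.1 fun β hβ => Finset.mem_singleton.2 (heq β hβ) with rfl | rfl
  · exact h.one_le α hα
  · rw [Finset.sum_singleton]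
    exact h.two_smul_lt α hα (Finset.singleton_subset_iff.1 hG)

variable [CharZero K]

lemma ne_zero (h : IsRootMultiplicity K Δ m) (hα : α ∈ Δ) : α ≠ 0 := by
  rintro rfl
  have := h.eq_of_eq_smul 0 hα 0 hα 3 (smul_zero _).symm
  norm_num at this

lemma forall_of_forall_half_smul_notMem (h : IsRootMultiplicity K Δ m) {P : V → Prop}
    (htwo : ∀ α, P α → P ((2 : K) • α)) (hP : ∀ α ∈ Δ, (1 / 2 : K) • α ∉ Δ → P α) :
    ∀ α ∈ Δ, P α := by
  intro α hα
  by_cases hα_half : (1 / 2 : K) • α ∈ Δ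
  · have hα_quarter : (1 / 2 : K) • (1 / 2 : K) • α ∉ Δ := by
      intro hmem
      have := h.eq_of_eq_smul α hα _ hmem (1 / 4) (by rw [smul_smul]; norm_num)
      norm_num at this
    have := htwo _ (hP _ hα_half hα_quarter)
    rwa [smul_smul, mul_one_div_cancel two_ne_zero, one_smul] at this
  · exact hP α hα hα_half

lemma neg_mem_of_weightedCount_eq (h : IsRootMultiplicity K Δ m) {S : V → Set K} (hα : α ∈ Δ)
    (hα_half : (1 / 2 : K) • α ∉ Δ) {c : K} (hc : c ∈ S α)
    (heq : weightedCount Δ m S (c • α) = weightedCount Δ m S (-(c • α))) : -c ∈ S α := by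
  rcases eq_or_ne c 0 with rfl | hc₀
  · rwa [neg_zero]
  by_contra hneg
  have hle : m α ≤ weightedCount Δ m S (c • α) :=
    Finset.single_le_sum (fun _ _ => Nat.zero_le _) (Finset.mem_filter.2 ⟨hα, c, hc, rfl⟩)
  have hlt : weightedCount Δ m S (-(c • α)) < m α := by
    refine h.sum_lt_of_forall_eq_two_smul hα (Finset.filter_subset _ _) fun β hβ => ?_
    obtain ⟨hβΔ, d, hd, hdβ⟩ := Finset.mem_filter.1 hβ
    rw [← neg_smul] at hdβ
    have hd₀ : d ≠ 0 := by
      rintro rfl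
      rw [zero_smul] at hdβ
      exact smul_ne_zero (neg_ne_zero.2 hc₀) (h.ne_zero hα) hdβ.symm
    have hβα : β = (d⁻¹ * -c) • α := by rw [mul_smul, ← hdβ, inv_smul_smul₀ hd₀]
    refine h.eq_two_smul_of_half_smul_notMem hα hα_half hβΔ hβα ?_
    rintro rfl
    exact hneg (smul_left_injective K (h.ne_zero hα) hdβ ▸ hd)
  exact (hle.trans_eq heq).not_gt hlt

end IsRootMultiplicity

lemma weightedCount_neg {Δ : Finset V} (m : V → ℕ) {S : V → Set K}
    (hS : ∀ α ∈ Δ, -S α = S α) (v : V) :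
    weightedCount Δ m S (-v) = weightedCount Δ m S v := by
  refine Finset.sum_congr (Finset.filter_congr fun α hα => ?_) fun _ _ => rfl
  have hneg_mem (c : K) : -c ∈ S α ↔ c ∈ S α := by rw [← Set.mem_neg, hS α hα]
  rw [neg_surjective.exists]
  simp only [hneg_mem, neg_smul, neg_inj]

theorem IsRootMultiplicity.weightedCount_eq_neg_iff [CharZero K] {Δ : Finset V} {m : V → ℕ}
    (h : IsRootMultiplicity K Δ m) {S : V → Set K}
    (htwo : ∀ α, -S α = S α → -S ((2 : K) • α) = S ((2 : K) • α)) :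
    (∀ v, weightedCount Δ m S v = weightedCount Δ m S (-v)) ↔ ∀ α ∈ Δ, -S α = S α := by
  refine ⟨fun heq => ?_, fun hS v => (weightedCount_neg m hS v).symm⟩
  refine h.forall_of_forall_half_smul_notMem htwo fun α hα hα_half => ?_
  exact Set.neg_eq_self_iff_neg_subset.2 <| Set.neg_subset.2 fun c hc =>
    h.neg_mem_of_weightedCount_eq hα hα_half hc (heq _)

lemma weightedCount_eq_sum_mul_ite (Δ : Finset V) (m : V → ℕ) (S : V → Set K) (v : V) :
    weightedCount Δ m S v = ∑ α ∈ Δ, m α * if ∃ c ∈ S α, c • α = v then 1 else 0 := by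
  simp only [weightedCount, Finset.sum_filter, mul_boole]

lemma count_sum_replicate_smul (Δ : Finset V) (m : V → ℕ) (a : V → K) (v : V) :
    (∑ α ∈ Δ, Multiset.replicate (m α) (a α • α)).count v =
      weightedCount Δ m (fun α => {a α}) v := by
  simp only [weightedCount, Multiset.count_sum', Multiset.count_replicate, Finset.sum_filter,
    Set.mem_singleton_iff, exists_eq_left]

end RootMultiplicity

lemma map_neg_eq_self_iff_count_eq_count_neg {A : Type*} [InvolutiveNeg A] (s : Multiset A) :
    s.map (fun v => -v) = s ↔ ∀ v, s.count v = s.count (-v) := by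
  have hcount (v : A) : (s.map fun v => -v).count v = s.count (-v) := by
    rw [← Multiset.count_map_eq_count' _ s neg_injective (-v), neg_neg]
  simp only [Multiset.ext, hcount, eq_comm]

section Angles

-- Multiples of `π` are included because there `cot x = cos x / 0 = 0`.
lemma cot_eq_zero_iff_exists_int_mul_pi_div_two {x : ℝ} :
    cot x = 0 ↔ ∃ k : ℤ, x = k * (π / 2) := by
  calc cot x = 0 ↔ sin (2 * x) = 0 := by
        rw [cot_eq_cos_div_sin, div_eq_zero_iff, sin_two_mul, mul_assoc, mul_eq_zero, mul_eq_zero,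
          or_iff_right two_ne_zero, or_comm]
    _ ↔ ∃ k : ℤ, k * π = 2 * x := sin_eq_zero_iff
    _ ↔ ∃ k : ℤ, x = k * (π / 2) := exists_congr fun k => by constructor <;> intro h <;> linarith

lemma neg_singleton_cot_eq_self_iff {x : ℝ} :
    -({cot x} : Set ℝ) = {cot x} ↔ ∃ k : ℤ, x = k * (π / 2) := by
  rw [Set.neg_singleton, Set.singleton_eq_singleton_iff, neg_eq_self,
    cot_eq_zero_iff_exists_int_mul_pi_div_two]

lemma neg_range_inv_add_int_mul_pi_eq_self_iff {x : ℝ} :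
    -Set.range (fun k : ℤ => (x + k * π)⁻¹) = Set.range (fun k : ℤ => (x + k * π)⁻¹) ↔
      ∃ k : ℤ, x = k * (π / 2) := by
  rw [Set.neg_eq_self_iff_neg_subset, Set.neg_range, Set.range_subset_iff]
  constructor
  · intro hsymm
    obtain ⟨k, hk⟩ := hsymm 0
    have hneg : x + k * π = -x := by simpa [← inv_neg] using hk
    exact ⟨-k, by push_cast; linarith⟩
  · rintro ⟨k, rfl⟩ j
    have hneg : k * (π / 2) + (-k - j : ℤ) * π = -(k * (π / 2) + j * π) := by push_cast; ring
    exact ⟨-k - j, (congrArg (·⁻¹) hneg).trans inv_neg⟩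

variable {V : Type*} [AddCommGroup V] [Module ℝ V]

lemma IsRootMultiplicity.weightedCount_filter_eq_neg_iff {Δ : Finset V} {m : V → ℕ}
    (h : IsRootMultiplicity ℝ Δ m) (f : V →ₗ[ℝ] ℝ) {T : ℝ → Set ℝ}
    (hT : ∀ x, -T x = T x ↔ ∃ k : ℤ, x = k * (π / 2)) :
    (∀ v, weightedCount {α ∈ Δ | ¬∃ k : ℤ, f α = k * π} m (fun α => T (f α)) v =
        weightedCount {α ∈ Δ | ¬∃ k : ℤ, f α = k * π} m (fun α => T (f α)) (-v)) ↔
      ∀ α ∈ Δ, ∃ k : ℤ, f α = k * (π / 2) := by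
  have htwo (α : V) (hα : -T (f α) = T (f α)) : -T (f ((2 : ℝ) • α)) = T (f ((2 : ℝ) • α)) := by
    obtain ⟨k, hk⟩ := (hT _).1 hα
    refine (hT _).2 ⟨2 * k, ?_⟩
    rw [map_smul, hk, smul_eq_mul]
    push_cast
    ring
  rw [(h.mono (Finset.filter_subset _ _)).weightedCount_eq_neg_iff htwo]
  simp only [hT, Finset.mem_filter]
  refine ⟨fun hF α hα => ?_, fun hΔ α hα => hΔ α hα.1⟩
  by_cases hπ : ∃ k : ℤ, f α = k * π
  · obtain ⟨k, hk⟩ := hπ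
    exact ⟨2 * k, by rw [hk]; push_cast; ring⟩
  · exact hF α ⟨hα, hπ⟩

theorem sigma_eq_tau_austere_tfae_general {Δ : Finset V} {m : V → ℕ}
    (h : IsRootMultiplicity ℝ Δ m) (f : V →ₗ[ℝ] ℝ) :
    (((∑ α ∈ Δ.filter (fun α => ¬ ∃ k : ℤ, f α = k * π),
          Multiset.replicate (m α) (cot (f α) • α)).map (fun v => -v) =
        ∑ α ∈ Δ.filter (fun α => ¬ ∃ k : ℤ, f α = k * π),
          Multiset.replicate (m α) (cot (f α) • α)) ↔
      (∀ α ∈ Δ, ∃ k : ℤ, f α = k * (π / 2))) ∧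
    ((∀ α ∈ Δ, ∃ k : ℤ, f α = k * (π / 2)) ↔
      (∀ v : V, v ≠ 0 →
        (∑ α ∈ Δ.filter (fun α => ¬ ∃ k : ℤ, f α = k * π),
            m α * (if ∃ k : ℤ, (f α + k * π)⁻¹ • α = v then 1 else 0)) =
          ∑ α ∈ Δ.filter (fun α => ¬ ∃ k : ℤ, f α = k * π),
            m α * (if ∃ k : ℤ, (f α + k * π)⁻¹ • α = -v then 1 else 0))) := by
  constructor
  · simp only [map_neg_eq_self_iff_count_eq_count_neg, count_sum_replicate_smul]
    exact h.weightedCount_filter_eq_neg_iff f fun x => neg_singleton_cot_eq_self_iff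
  · rw [← h.weightedCount_filter_eq_neg_iff f fun x => neg_range_inv_add_int_mul_pi_eq_self_iff]
    simp only [weightedCount_eq_sum_mul_ite, Set.exists_range_iff]
    refine forall_congr' fun v => ⟨fun heq _ => heq, fun heq => ?_⟩
    rcases eq_or_ne v 0 with rfl | hv
    · rw [neg_zero]
    · exact heq hv

end Angles

/-- Combinatorial core of Theorem 7.2 (Theorem II(i)). With `Δ` a finite set of nonzero
vectors in which proportional members differ only by a factor `1`, `2` or `1/2`, and
multiplicities `m : Δ → ℕ` with `m α ≥ 1` and `m α > m (2α)`, the following are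
equivalent for `w`:
(i) the multiset of vectors `cot ⟨α,w⟩ • α` (each with multiplicity `m α`, over the
`α ∈ Δ` with `⟨α,w⟩ ∉ πℤ`) is negation-invariant;
(ii) `⟨α,w⟩ ∈ (π/2)ℤ` for every `α ∈ Δ`;
(iii) for every nonzero `v`, the `m`-weighted count of `α` (with `⟨α,w⟩ ∉ πℤ`) for which
some integer `k` gives `(⟨α,w⟩+kπ)⁻¹ • α = v` equals that for `-v`. -/
theorem sigma_eq_tau_austere_tfae
    {V : Type*} [NormedAddCommGroup V] [InnerProductSpace ℝ V] [FiniteDimensional ℝ V]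
    (Δ : Finset V) (hne : ∀ α ∈ Δ, α ≠ 0)
    (hsc : ∀ α ∈ Δ, ∀ α' ∈ Δ, ∀ c : ℝ, α' = c • α →
      c = 1 ∨ c = 2 ∨ c = 1 / 2)
    (m : V → ℕ) (hm : ∀ α ∈ Δ, 1 ≤ m α)
    (hmgt : ∀ α ∈ Δ, (2 : ℝ) • α ∈ Δ → m ((2 : ℝ) • α) < m α)
    (w : V) :
    (((∑ α ∈ Δ.filter (fun α => ¬ ∃ k : ℤ, (⟪α, w⟫ : ℝ) = k * π),
          Multiset.replicate (m α) (Real.cot ⟪α, w⟫ • α)).map (fun v => -v) =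
        ∑ α ∈ Δ.filter (fun α => ¬ ∃ k : ℤ, (⟪α, w⟫ : ℝ) = k * π),
          Multiset.replicate (m α) (Real.cot ⟪α, w⟫ • α)) ↔
      (∀ α ∈ Δ, ∃ k : ℤ, (⟪α, w⟫ : ℝ) = k * (π / 2))) ∧
    ((∀ α ∈ Δ, ∃ k : ℤ, (⟪α, w⟫ : ℝ) = k * (π / 2)) ↔
      (∀ v : V, v ≠ 0 →
        (∑ α ∈ Δ.filter (fun α => ¬ ∃ k : ℤ, (⟪α, w⟫ : ℝ) = k * π),
            m α * (if ∃ k : ℤ, ((⟪α, w⟫ : ℝ) + k * π)⁻¹ • α = v then 1 else 0)) =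
          ∑ α ∈ Δ.filter (fun α => ¬ ∃ k : ℤ, (⟪α, w⟫ : ℝ) = k * π),
            m α * (if ∃ k : ℤ, ((⟪α, w⟫ : ℝ) + k * π)⁻¹ • α = -v then 1 else 0))) :=
  sigma_eq_tau_austere_tfae_general ⟨hsc, hm, hmgt⟩ ((innerₗ V).flip w)
end

section
/- Let V be a finite-dimensional real inner product space and Δ⁺ a finite set of nonzero vectors of V such that whenever α, α' ∈ Δ⁺ and α' = c·α for some real number c, then c ∈ {1, 2, 1/2}. Let m₊, m₋ : Δ⁺ → ℕ satisfy m₊(α)+m₋(α) ≥ 1 for all α ∈ Δ⁺, and m₊(α)+m₋(α) > m₊(2α)+m₋(2α) whenever both α and 2α lie in Δ⁺. Fix w ∈ V. For α ∈ Δ⁺ define a finite multiset Θ_α of real numbers as follows: if ⟨α,w⟩ ∈ (π/2)ℤ then Θ_α is empty; otherwise Θ_α contains ⟨α,w⟩ with multiplicity m₊(α) and ⟨α,w⟩+π/2 with multiplicity m₋(α). Assume that the multiset of vectors {cot(θ)·α : α ∈ Δ⁺, θ ∈ Θ_α} (with multiplicities) is negation-invariant. Then for every nonzero v ∈ V, the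 total number (with multiplicity) of pairs (α,θ) with α ∈ Δ⁺, θ ∈ Θ_α for which there exists an integer m with (θ+mπ)⁻¹·α = v equals the total number of such pairs for which there exists an integer m with (θ+mπ)⁻¹·α = −v. -/
open Real
open scoped Classical RealInnerProductSpace

/-- The multiset of "angles" attached to a root `α` in the commuting case: empty when
`⟨α,w⟩ ∈ (π/2)ℤ`; otherwise `⟨α,w⟩` with multiplicity `m₊ α` together with
`⟨α,w⟩ + π/2` with multiplicity `m₋ α`. -/
noncomputable def commutingAngles {V : Type*} [NormedAddCommGroup V]
    [InnerProductSpace ℝ V] (mp mm : V → ℕ) (w α : V) : Multiset ℝ :=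
  if ∃ k : ℤ, (⟪α, w⟫ : ℝ) = k * (π / 2) then 0
  else Multiset.replicate (mp α) (⟪α, w⟫ : ℝ) +
    Multiset.replicate (mm α) ((⟪α, w⟫ : ℝ) + π / 2)

/-!
In a negation-invariant sum, a vector `cot θ • α` with `θ ∈ Θ_α` can only be cancelled by vectors of
the roots `α`, `2α`, `α / 2`. Suppose that `α / 2` is not a root and `Θ_α ≠ 0`. Since
`cot θ + cot θ' = sin (θ + θ') / (sin θ * sin θ')`, two vectors of `α` are opposite only if
`cos (2⟪α, w⟫) = 0`; otherwise the negatives of all vectors of `α` are among those of `2α`, which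
are too few because the multiplicity drops from `α` to `2α`. So `2⟪α, w⟫ ∈ π/2 + πℤ`, which forces
`Θ_{2α} = 0`: the vectors of `α` cancel among themselves, and `m₊ α = m₋ α`. Consequently
`θ ↦ 2⟪α, w⟫ + π/2 - θ` permutes `Θ_α` and maps `θ + πℤ` onto `-θ + πℤ`. If `α / 2` is a root, then
`Θ_α = 0`: otherwise `Θ_{α/2} ≠ 0`, so that `cos ⟪α, w⟫ = 0` and `⟪α, w⟫ ∈ (π/2)ℤ`.
-/

section NegInvariant

variable {ι G : Type*} [InvolutiveNeg G]

/-- A multiset is negation-invariant if it coincides with its image under `x ↦ -x`; this is the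
condition on the principal curvature vectors that makes a submanifold austere. -/
def NegInvariant (S : Multiset G) : Prop :=
  S.map (fun x => -x) = S

lemma NegInvariant.count_neg {S : Multiset G} (hS : NegInvariant S) (x : G) :
    S.count (-x) = S.count x := by
  conv_lhs => rw [← hS]
  exact Multiset.count_map_eq_count' _ _ neg_injective x

lemma NegInvariant.exists_neg_mem {s : Finset ι} {f : ι → Multiset G}
    (hS : NegInvariant (∑ i ∈ s, f i)) {i : ι} (hi : i ∈ s) {x : G} (hx : x ∈ f i) :
    ∃ j ∈ s, -x ∈ f j := by
  rw [← Multiset.mem_sum, ← Multiset.count_pos, hS.count_neg, Multiset.count_pos,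
    Multiset.mem_sum]
  exact ⟨i, hi, hx⟩

lemma NegInvariant.map_neg_le {s : Finset ι} {f : ι → Multiset G}
    (hS : NegInvariant (∑ i ∈ s, f i)) {i k : ι} (hi : i ∈ s)
    (hk : ∀ x ∈ f i, ∀ j ∈ s, -x ∈ f j → j = k) :
    (f i).map (fun x => -x) ≤ f k := by
  rw [Multiset.le_iff_count]
  intro y
  obtain ⟨x, rfl⟩ := neg_surjective y
  rw [Multiset.count_map_eq_count' _ _ neg_injective]
  by_cases hx : x ∈ f i
  · obtain ⟨j, hj, hnx⟩ := hS.exists_neg_mem hi hx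
    have hks : k ∈ s := hk x hx j hj hnx ▸ hj
    calc (f i).count x ≤ (∑ j ∈ s, f j).count x :=
          Multiset.count_le_of_le x (Finset.single_le_sum (fun _ _ => Multiset.zero_le _) hi)
      _ = (∑ j ∈ s, f j).count (-x) := (hS.count_neg x).symm
      _ = ∑ j ∈ s, (f j).count (-x) := Multiset.count_sum'
      _ = (f k).count (-x) := Finset.sum_eq_single_of_mem k hks fun j hj hjk =>
          Multiset.count_eq_zero.2 fun h => hjk (hk x hx j hj h)
  · rw [Multiset.count_eq_zero_of_notMem hx]
    exact Nat.zero_le _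

lemma NegInvariant.eq_of_replicate_add_replicate_neg {x : G} {p m : ℕ}
    (h : NegInvariant (Multiset.replicate p x + Multiset.replicate m (-x))) (hx : x ≠ -x) :
    p = m := by
  have hcount := h.count_neg x
  simp only [Multiset.count_add, Multiset.count_replicate, if_neg hx, if_neg hx.symm, if_true,
    zero_add, add_zero] at hcount
  exact hcount.symm

end NegInvariant

section Trigonometry

lemma sin_two_mul_ne_zero_iff {x : ℝ} : sin (2 * x) ≠ 0 ↔ sin x ≠ 0 ∧ cos x ≠ 0 := by
  rw [sin_two_mul, mul_ne_zero_iff, mul_ne_zero_iff, and_iff_right two_ne_zero]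

lemma cot_ne_zero_of_sin_two_mul_ne_zero {x : ℝ} (h : sin (2 * x) ≠ 0) : Real.cot x ≠ 0 := by
  obtain ⟨hsin, hcos⟩ := sin_two_mul_ne_zero_iff.1 h
  rw [Real.cot_eq_cos_div_sin]
  exact div_ne_zero hcos hsin

lemma exists_eq_int_mul_pi_div_two_iff (x : ℝ) :
    (∃ k : ℤ, x = k * (π / 2)) ↔ sin (2 * x) = 0 := by
  rw [Real.sin_eq_zero_iff]
  exact exists_congr fun k => ⟨fun h => by linarith, fun h => by linarith⟩

lemma cot_add_cot {x y : ℝ} (hx : sin x ≠ 0) (hy : sin y ≠ 0) :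
    Real.cot x + Real.cot y = sin (x + y) / (sin x * sin y) := by
  rw [Real.cot_eq_cos_div_sin, Real.cot_eq_cos_div_sin, sin_add]
  field_simp
  ring

lemma exists_add_int_mul_pi_inv_smul_iff {E : Type*} [AddCommGroup E] [Module ℝ E] {θ θ' : ℝ}
    {n : ℤ} (h : θ + θ' = n * π) (x y : E) :
    (∃ m : ℤ, (θ + m * π)⁻¹ • x = y) ↔ ∃ m : ℤ, (θ' + m * π)⁻¹ • x = -y := by
  rw [← (Equiv.subLeft (-n)).exists_congr_right]
  refine exists_congr fun m => ?_
  have hneg : θ' + m * π = -(θ + ((-n - m : ℤ) : ℝ) * π) := by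
    push_cast
    linarith
  rw [Equiv.subLeft_apply, hneg, inv_neg, neg_smul, neg_inj]

end Trigonometry

section Angles

variable {V : Type*} [NormedAddCommGroup V] [InnerProductSpace ℝ V]
  {mp mm : V → ℕ} {w α : V} {θ θ' : ℝ}

lemma commutingAngles_of_sin_ne_zero (h : sin (2 * ⟪α, w⟫) ≠ 0) :
    commutingAngles mp mm w α =
      Multiset.replicate (mp α) ⟪α, w⟫ + Multiset.replicate (mm α) (⟪α, w⟫ + π / 2) :=
  if_neg fun hk => h ((exists_eq_int_mul_pi_div_two_iff _).1 hk)

lemma sin_two_mul_inner_ne_zero_of_mem (hθ : θ ∈ commutingAngles mp mm w α) :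
    sin (2 * ⟪α, w⟫) ≠ 0 := fun h => by
  rw [commutingAngles, if_pos ((exists_eq_int_mul_pi_div_two_iff _).2 h)] at hθ
  exact Multiset.notMem_zero _ hθ

lemma eq_or_eq_of_mem_commutingAngles (hθ : θ ∈ commutingAngles mp mm w α) :
    θ = ⟪α, w⟫ ∨ θ = ⟪α, w⟫ + π / 2 := by
  rw [commutingAngles_of_sin_ne_zero (sin_two_mul_inner_ne_zero_of_mem hθ),
    Multiset.mem_add] at hθ
  exact hθ.imp Multiset.eq_of_mem_replicate Multiset.eq_of_mem_replicate

lemma card_commutingAngles_of_sin_ne_zero (h : sin (2 * ⟪α, w⟫) ≠ 0) :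
    (commutingAngles mp mm w α).card = mp α + mm α := by
  rw [commutingAngles_of_sin_ne_zero h, Multiset.card_add, Multiset.card_replicate,
    Multiset.card_replicate]

lemma card_commutingAngles_le : (commutingAngles mp mm w α).card ≤ mp α + mm α := by
  by_cases h : sin (2 * ⟪α, w⟫) = 0
  · rw [commutingAngles, if_pos ((exists_eq_int_mul_pi_div_two_iff _).2 h)]
    exact Nat.zero_le _
  · exact (card_commutingAngles_of_sin_ne_zero h).le

lemma sin_two_mul_ne_zero_of_mem (hθ : θ ∈ commutingAngles mp mm w α) :
    sin (2 * θ) ≠ 0 := by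
  have h := sin_two_mul_inner_ne_zero_of_mem hθ
  rcases eq_or_eq_of_mem_commutingAngles hθ with rfl | rfl
  · exact h
  · rwa [mul_add, mul_div_cancel₀ π two_ne_zero, sin_add_pi, neg_ne_zero]

lemma cot_add_cot_ne_zero_of_mem_commutingAngles (hcos : cos (2 * ⟪α, w⟫) ≠ 0)
    (hθ : θ ∈ commutingAngles mp mm w α) (hθ' : θ' ∈ commutingAngles mp mm w α) :
    Real.cot θ + Real.cot θ' ≠ 0 := by
  have hsinθ := (sin_two_mul_ne_zero_iff.1 (sin_two_mul_ne_zero_of_mem hθ)).1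
  have hsinθ' := (sin_two_mul_ne_zero_iff.1 (sin_two_mul_ne_zero_of_mem hθ')).1
  rw [cot_add_cot hsinθ hsinθ']
  refine div_ne_zero ?_ (mul_ne_zero hsinθ hsinθ')
  have hsin := sin_two_mul_inner_ne_zero_of_mem hθ
  set x : ℝ := ⟪α, w⟫
  have hsum : θ + θ' = 2 * x ∨ θ + θ' = 2 * x + π / 2 ∨ θ + θ' = 2 * x + π := by
    rcases eq_or_eq_of_mem_commutingAngles hθ with h | h <;>
      rcases eq_or_eq_of_mem_commutingAngles hθ' with h' | h' <;> grind
  rcases hsum with h | h | h <;> rw [h]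
  · exact hsin
  · rwa [sin_add_pi_div_two]
  · rwa [sin_add_pi, neg_ne_zero]

lemma map_reflect_commutingAngles (h : mp α = mm α) :
    (commutingAngles mp mm w α).map (fun θ => 2 * ⟪α, w⟫ + π / 2 - θ) =
      commutingAngles mp mm w α := by
  rw [commutingAngles]
  split_ifs
  · rfl
  · rw [Multiset.map_add, Multiset.map_replicate, Multiset.map_replicate, h, add_comm]
    congr 2 <;> ring

lemma countP_commutingAngles_neg (hcos : cos (2 * ⟪α, w⟫) = 0) (hm : mp α = mm α) (v : V) :
    (commutingAngles mp mm w α).countP (fun θ => ∃ m : ℤ, (θ + m * π)⁻¹ • α = v) =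
      (commutingAngles mp mm w α).countP (fun θ => ∃ m : ℤ, (θ + m * π)⁻¹ • α = -v) := by
  obtain ⟨n, hn⟩ := Real.cos_eq_zero_iff.1 hcos
  conv_rhs => rw [← map_reflect_commutingAngles hm]
  rw [Multiset.countP_map, ← Multiset.countP_eq_card_filter]
  refine Multiset.countP_congr rfl fun θ _ => propext ?_
  refine exists_add_int_mul_pi_inv_smul_iff (n := n + 1) ?_ α v
  push_cast
  linarith

/-- The curvature vectors `cot θ • α`, `θ ∈ Θ_α`, contributed by the root `α`: the Hermann orbit is
austere when the sum of these multisets over all positive roots is negation-invariant. -/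
noncomputable def cotVectors (mp mm : V → ℕ) (w α : V) : Multiset V :=
  (commutingAngles mp mm w α).map fun θ => Real.cot θ • α

lemma cotVectors_of_cos_eq_zero (hsin : sin (2 * ⟪α, w⟫) ≠ 0) (hcos : cos (2 * ⟪α, w⟫) = 0) :
    cotVectors mp mm w α = Multiset.replicate (mp α) (Real.cot ⟪α, w⟫ • α) +
      Multiset.replicate (mm α) (-(Real.cot ⟪α, w⟫ • α)) := by
  have hcot : Real.cot (⟪α, w⟫ + π / 2) = -Real.cot ⟪α, w⟫ := by
    obtain ⟨hs, hc⟩ := sin_two_mul_ne_zero_iff.1 hsin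
    have hs' : sin (⟪α, w⟫ + π / 2) ≠ 0 := by rwa [sin_add_pi_div_two]
    rw [eq_neg_iff_add_eq_zero, cot_add_cot hs' hs, add_right_comm, ← two_mul,
      sin_add_pi_div_two, hcos, zero_div]
  rw [cotVectors, commutingAngles_of_sin_ne_zero hsin, Multiset.map_add, Multiset.map_replicate,
    Multiset.map_replicate, hcot, neg_smul]

end Angles

section Roots

variable {V : Type*} [NormedAddCommGroup V] [InnerProductSpace ℝ V]
  {Δ : Finset V} {mp mm : V → ℕ} {w α β : V} {θ : ℝ}
  (hsc : ∀ α ∈ Δ, ∀ α' ∈ Δ, ∀ c : ℝ, α' = c • α → c = 1 ∨ c = 2 ∨ c = 1 / 2)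

include hsc

lemma ne_zero_of_mem_of_scaling (hα : α ∈ Δ) : α ≠ 0 := by
  rintro rfl
  have h := hsc 0 hα 0 hα 3 (smul_zero _).symm
  norm_num at h

lemma half_smul_notMem_of_two_smul_mem (hα : (2 : ℝ) • α ∈ Δ) : (1 / 2 : ℝ) • α ∉ Δ := fun h => by
  have h := hsc _ hα _ h (1 / 4) (by rw [smul_smul]; norm_num)
  norm_num at h

lemma eq_or_eq_two_smul_or_eq_half_smul {x : V} (hα : α ∈ Δ) (hβ : β ∈ Δ)
    (hx : x ∈ cotVectors mp mm w α) (hnx : -x ∈ cotVectors mp mm w β) :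
    β = α ∨ β = (2 : ℝ) • α ∨ β = (1 / 2 : ℝ) • α := by
  obtain ⟨θ, -, rfl⟩ := Multiset.mem_map.1 hx
  obtain ⟨θ', hθ', h⟩ := Multiset.mem_map.1 hnx
  have hcot := cot_ne_zero_of_sin_two_mul_ne_zero (sin_two_mul_ne_zero_of_mem hθ')
  have hβα : β = ((Real.cot θ')⁻¹ * -Real.cot θ) • α := by
    rw [mul_smul, neg_smul, ← h, inv_smul_smul₀ hcot]
  refine (hsc α hα β hβ _ hβα).imp (fun hc => ?_) (Or.imp (fun hc => ?_) fun hc => ?_)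
  · rw [hβα, hc, one_smul]
  · rw [hβα, hc]
  · rw [hβα, hc]

lemma neg_notMem_cotVectors_of_cos_ne_zero {x : V} (hα : α ∈ Δ) (hcos : cos (2 * ⟪α, w⟫) ≠ 0)
    (hx : x ∈ cotVectors mp mm w α) : -x ∉ cotVectors mp mm w α := by
  intro hnx
  obtain ⟨θ, hθ, rfl⟩ := Multiset.mem_map.1 hx
  obtain ⟨θ', hθ', h⟩ := Multiset.mem_map.1 hnx
  rw [eq_neg_iff_add_eq_zero, ← add_smul] at h
  exact smul_ne_zero (cot_add_cot_ne_zero_of_mem_commutingAngles hcos hθ' hθ)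
    (ne_zero_of_mem_of_scaling hsc hα) h

variable (hmgt : ∀ α ∈ Δ, (2 : ℝ) • α ∈ Δ →
    mp ((2 : ℝ) • α) + mm ((2 : ℝ) • α) < mp α + mm α)
  (hS : NegInvariant (∑ α ∈ Δ, cotVectors mp mm w α))

include hmgt hS

lemma cos_eq_zero_of_half_notMem (hα : α ∈ Δ) (hhalf : (1 / 2 : ℝ) • α ∉ Δ)
    (hθ : θ ∈ commutingAngles mp mm w α) : cos (2 * ⟪α, w⟫) = 0 := by
  by_contra hcos
  have eq_two_smul : ∀ x ∈ cotVectors mp mm w α, ∀ β ∈ Δ, -x ∈ cotVectors mp mm w β →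
      β = (2 : ℝ) • α := by
    intro x hx β hβ hnx
    rcases eq_or_eq_two_smul_or_eq_half_smul hsc hα hβ hx hnx with rfl | h | rfl
    · exact absurd hnx (neg_notMem_cotVectors_of_cos_ne_zero hsc hα hcos hx)
    · exact h
    · exact absurd hβ hhalf
  have two_smul_mem : (2 : ℝ) • α ∈ Δ := by
    have hx : Real.cot θ • α ∈ cotVectors mp mm w α := Multiset.mem_map_of_mem _ hθ
    obtain ⟨β, hβ, hnx⟩ := hS.exists_neg_mem hα hx
    exact eq_two_smul _ hx β hβ hnx ▸ hβ
  refine (hmgt α hα two_smul_mem).not_ge ?_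
  calc mp α + mm α = ((cotVectors mp mm w α).map (fun x => -x)).card := by
        rw [Multiset.card_map, cotVectors, Multiset.card_map,
          card_commutingAngles_of_sin_ne_zero (sin_two_mul_inner_ne_zero_of_mem hθ)]
    _ ≤ (cotVectors mp mm w ((2 : ℝ) • α)).card :=
        Multiset.card_le_card (hS.map_neg_le hα eq_two_smul)
    _ = (commutingAngles mp mm w ((2 : ℝ) • α)).card := Multiset.card_map _ _
    _ ≤ mp ((2 : ℝ) • α) + mm ((2 : ℝ) • α) := card_commutingAngles_le

lemma half_notMem_of_mem_commutingAngles (hα : α ∈ Δ) (hθ : θ ∈ commutingAngles mp mm w α) :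
    (1 / 2 : ℝ) • α ∉ Δ := by
  intro hhalf
  obtain ⟨β, rfl⟩ : ∃ β, (2 : ℝ) • β = α := ⟨_, smul_inv_smul₀ two_ne_zero α⟩
  have hβ : β ∈ Δ := by simpa [smul_smul] using hhalf
  have hsin := sin_two_mul_inner_ne_zero_of_mem hθ
  rw [real_inner_smul_left] at hsin
  obtain ⟨hsinβ, hcosβ⟩ := sin_two_mul_ne_zero_iff.1 hsin
  have hcard : 0 < (commutingAngles mp mm w β).card := by
    rw [card_commutingAngles_of_sin_ne_zero hsinβ]
    exact Nat.zero_lt_of_lt (hmgt β hβ hα)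
  obtain ⟨φ, hφ⟩ := Multiset.card_pos_iff_exists_mem.1 hcard
  exact hcosβ (cos_eq_zero_of_half_notMem hsc hmgt hS hβ
    (half_smul_notMem_of_two_smul_mem hsc hα) hφ)

lemma mp_eq_mm_of_mem_commutingAngles (hα : α ∈ Δ) (hθ : θ ∈ commutingAngles mp mm w α) :
    mp α = mm α := by
  have hhalf := half_notMem_of_mem_commutingAngles hsc hmgt hS hα hθ
  have hcos := cos_eq_zero_of_half_notMem hsc hmgt hS hα hhalf hθ
  have hsin := sin_two_mul_inner_ne_zero_of_mem hθ
  have eq_self : ∀ x ∈ cotVectors mp mm w α, ∀ β ∈ Δ, -x ∈ cotVectors mp mm w β → β = α := by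
    intro x hx β hβ hnx
    rcases eq_or_eq_two_smul_or_eq_half_smul hsc hα hβ hx hnx with h | rfl | rfl
    · exact h
    · obtain ⟨φ, hφ, -⟩ := Multiset.mem_map.1 hnx
      refine absurd ?_ (sin_two_mul_inner_ne_zero_of_mem hφ)
      rw [real_inner_smul_left, sin_two_mul, hcos, mul_zero]
    · exact absurd hβ hhalf
  have hinv : NegInvariant (cotVectors mp mm w α) :=
    Multiset.eq_of_le_of_card_le (hS.map_neg_le hα eq_self) (Multiset.card_map _ _).ge
  rw [cotVectors_of_cos_eq_zero hsin hcos] at hinv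
  refine hinv.eq_of_replicate_add_replicate_neg fun h => ?_
  rw [eq_neg_iff_add_eq_zero, ← two_smul ℝ] at h
  exact smul_ne_zero two_ne_zero (smul_ne_zero (cot_ne_zero_of_sin_two_mul_ne_zero hsin)
    (ne_zero_of_mem_of_scaling hsc hα)) h

end Roots

theorem commuting_austere_implies_path_austere_general
    {V : Type*} [NormedAddCommGroup V] [InnerProductSpace ℝ V] {Δ : Finset V}
    (hsc : ∀ α ∈ Δ, ∀ α' ∈ Δ, ∀ c : ℝ, α' = c • α → c = 1 ∨ c = 2 ∨ c = 1 / 2)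
    {mp mm : V → ℕ}
    (hmgt : ∀ α ∈ Δ, (2 : ℝ) • α ∈ Δ →
      mp ((2 : ℝ) • α) + mm ((2 : ℝ) • α) < mp α + mm α)
    {w : V} (hS : NegInvariant (∑ α ∈ Δ, cotVectors mp mm w α))
    {α : V} (hα : α ∈ Δ) (v : V) :
    (commutingAngles mp mm w α).countP (fun θ => ∃ m : ℤ, (θ + m * π)⁻¹ • α = v) =
      (commutingAngles mp mm w α).countP (fun θ => ∃ m : ℤ, (θ + m * π)⁻¹ • α = -v) := by
  obtain hempty | ⟨θ, hθ⟩ := (commutingAngles mp mm w α).empty_or_exists_mem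
  · rw [hempty, Multiset.countP_zero, Multiset.countP_zero]
  · have hhalf := half_notMem_of_mem_commutingAngles hsc hmgt hS hα hθ
    exact countP_commutingAngles_neg (cos_eq_zero_of_half_notMem hsc hmgt hS hα hhalf hθ)
      (mp_eq_mm_of_mem_commutingAngles hsc hmgt hS hα hθ) v

/-- Combinatorial core of Theorem 7.4 (Theorem II(ii)): in the commuting case, if the
multiset of vectors `cot θ • α` (`α ∈ Δ`, `θ ∈ Θ_α`) is negation-invariant, then for
every nonzero `v` the count of pairs `(α, θ)` admitting an integer `m` with
`(θ+mπ)⁻¹ • α = v` equals the count of those with `(θ+mπ)⁻¹ • α = -v`. -/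
theorem commuting_austere_implies_path_austere
    {V : Type*} [NormedAddCommGroup V] [InnerProductSpace ℝ V] [FiniteDimensional ℝ V]
    (Δ : Finset V) (hne : ∀ α ∈ Δ, α ≠ 0)
    (hsc : ∀ α ∈ Δ, ∀ α' ∈ Δ, ∀ c : ℝ, α' = c • α →
      c = 1 ∨ c = 2 ∨ c = 1 / 2)
    (mp mm : V → ℕ) (hm : ∀ α ∈ Δ, 1 ≤ mp α + mm α)
    (hmgt : ∀ α ∈ Δ, (2 : ℝ) • α ∈ Δ →
      mp ((2 : ℝ) • α) + mm ((2 : ℝ) • α) < mp α + mm α)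
    (w : V)
    (haustere :
      (∑ α ∈ Δ, (commutingAngles mp mm w α).map (fun θ => Real.cot θ • α)).map
          (fun v => -v) =
        ∑ α ∈ Δ, (commutingAngles mp mm w α).map (fun θ => Real.cot θ • α)) :
    ∀ v : V, v ≠ 0 →
      (∑ α ∈ Δ, (commutingAngles mp mm w α).countP
          (fun θ => ∃ m : ℤ, (θ + m * π)⁻¹ • α = v)) =
        ∑ α ∈ Δ, (commutingAngles mp mm w α).countP
          (fun θ => ∃ m : ℤ, (θ + m * π)⁻¹ • α = -v) := fun v _ =>
  Finset.sum_congr rfl fun _ hα =>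
    commuting_austere_implies_path_austere_general hsc hmgt haustere hα v
end

section
/- Let p > q ≥ 1 be integers and let e_1, …, e_q denote the standard orthonormal basis of Euclidean space ℝ^q. The finite multiset M of vectors of ℝ^q consisting of: −(√2+1)·e_i with multiplicity p−q for each 1 ≤ i ≤ q; −(e_i+e_j) with multiplicity 1 for each 1 ≤ i < j ≤ q; 2·e_i with multiplicity 1 for each i; (√2−1)·e_i with multiplicity p−q for each i; e_i+e_j with multiplicity 1 for each i < j; and the zero vector with multiplicity 1 for each pair i < j, is NOT negation-invariant. -/
open Real

/-!
For every index `k` the long vector `2eₖ` belongs to the multiset, but `-2eₖ` does not, since `-2`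
is never a `k`-th coordinate: the vectors `±(eᵢ + eⱼ)` with `i ≠ j` have coordinates `0` and `±1`
only, so `-2` could come only from a multiple of a single `eᵢ`, and the coefficients there are
`-(√2 + 1)`, `√2 - 1` and `2`.
-/

theorem neg_mem_of_map_neg_eq_self {E : Type*} [Neg E] {M : Multiset E}
    (hM : M.map (fun v => -v) = M) {v : E} (hv : v ∈ M) : -v ∈ M :=
  hM ▸ Multiset.mem_map_of_mem (fun v => -v) hv

section Coordinates

variable {ι 𝕜 : Type*} [DecidableEq ι] [RCLike 𝕜]

theorem smul_single_one_apply_eq_zero_or_eq (c : 𝕜) (i k : ι) :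
    (c • EuclideanSpace.single i (1 : 𝕜)) k = 0 ∨ (c • EuclideanSpace.single i (1 : 𝕜)) k = c := by
  rcases eq_or_ne k i with rfl | hki
  · simp
  · simp [hki]

theorem single_one_add_single_one_apply_eq_zero_or_eq_one {i j : ι} (hij : i ≠ j) (k : ι) :
    (EuclideanSpace.single i (1 : 𝕜) + EuclideanSpace.single j (1 : 𝕜)) k = 0 ∨
      (EuclideanSpace.single i (1 : 𝕜) + EuclideanSpace.single j (1 : 𝕜)) k = 1 := by
  rcases eq_or_ne k i with rfl | hki
  · simp [hij]
  · rcases eq_or_ne k j with rfl | hkj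
    · simp [hki]
    · simp [hki, hkj]

end Coordinates

/-- The multiset of principal curvature vectors of a Hermann orbit, with the multiplicity `m` and the
coefficients `a`, `b` of the short vectors `eᵢ` left free; the orbit through
`w = (π/8)(e₁+⋯+e_q)` has `m = p - q`, `a = -cot (π/8) = -(√2 + 1)` and `b = tan (π/8) = √2 - 1`. -/
noncomputable def hermannCurvatureVectors (ι : Type*) [Fintype ι] [LinearOrder ι]
    (m : ℕ) (a b : ℝ) : Multiset (EuclideanSpace ℝ ι) :=
  let e : ι → EuclideanSpace ℝ ι := fun i => EuclideanSpace.single i (1 : ℝ)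
  (∑ i : ι, Multiset.replicate m (a • e i)) +
  (∑ i : ι, ∑ j ∈ Finset.univ.filter (fun j => i < j), {-(e i + e j)}) +
  (∑ i : ι, {(2 : ℝ) • e i}) +
  (∑ i : ι, Multiset.replicate m (b • e i)) +
  (∑ i : ι, ∑ j ∈ Finset.univ.filter (fun j => i < j), {e i + e j}) +
  (∑ i : ι, ∑ _j ∈ Finset.univ.filter (fun j => i < j),
    ({0} : Multiset (EuclideanSpace ℝ ι)))

section CurvatureVectors

variable {ι : Type*} [Fintype ι] [LinearOrder ι]

theorem two_smul_single_mem_hermannCurvatureVectors (m : ℕ) (a b : ℝ) (k : ι) :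
    (2 : ℝ) • EuclideanSpace.single k (1 : ℝ) ∈ hermannCurvatureVectors ι m a b := by
  have hlong : (2 : ℝ) • EuclideanSpace.single k (1 : ℝ) ∈
      ∑ i : ι, ({(2 : ℝ) • EuclideanSpace.single i 1} : Multiset (EuclideanSpace ℝ ι)) :=
    Multiset.mem_sum.2 ⟨k, Finset.mem_univ k, Multiset.mem_singleton_self _⟩
  simp only [hermannCurvatureVectors, Multiset.mem_add, hlong, true_or, or_true]

theorem apply_mem_of_mem_hermannCurvatureVectors {m : ℕ} {a b : ℝ} {v : EuclideanSpace ℝ ι}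
    (hv : v ∈ hermannCurvatureVectors ι m a b) (k : ι) : v k ∈ ({a, b, -1, 0, 1, 2} : Set ℝ) := by
  simp only [hermannCurvatureVectors, Multiset.mem_add, Multiset.mem_sum, Multiset.mem_singleton,
    Finset.mem_filter, Finset.mem_univ, true_and] at hv
  rcases hv with ((((⟨i, hv⟩ | ⟨i, j, hij, rfl⟩) | ⟨i, rfl⟩) | ⟨i, hv⟩) | ⟨i, j, hij, rfl⟩) |
    ⟨-, -, -, rfl⟩
  · obtain rfl := Multiset.eq_of_mem_replicate hv
    rcases smul_single_one_apply_eq_zero_or_eq a i k with h | h <;> simp [h]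
  · rw [PiLp.neg_apply]
    rcases single_one_add_single_one_apply_eq_zero_or_eq_one (𝕜 := ℝ) hij.ne k with h | h <;>
      simp [h]
  · rcases smul_single_one_apply_eq_zero_or_eq (2 : ℝ) i k with h | h <;> simp [h]
  · obtain rfl := Multiset.eq_of_mem_replicate hv
    rcases smul_single_one_apply_eq_zero_or_eq b i k with h | h <;> simp [h]
  · rcases single_one_add_single_one_apply_eq_zero_or_eq_one (𝕜 := ℝ) hij.ne k with h | h <;>
      simp [h]
  · simp

theorem neg_two_smul_single_notMem_hermannCurvatureVectors (m : ℕ) {a b : ℝ} (ha : a ≠ -2)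
    (hb : b ≠ -2) (k : ι) :
    -((2 : ℝ) • EuclideanSpace.single k (1 : ℝ)) ∉ hermannCurvatureVectors ι m a b := by
  intro hmem
  have hcoord : (-2 : ℝ) ∈ ({a, b, -1, 0, 1, 2} : Set ℝ) := by
    simpa using apply_mem_of_mem_hermannCurvatureVectors hmem k
  rcases hcoord with h | h | h | h | h | h
  · exact ha h.symm
  · exact hb h.symm
  all_goals norm_num at h

theorem hermann_orbit_not_austere_general [Nonempty ι] (m : ℕ) {a b : ℝ} (ha : a ≠ -2)
    (hb : b ≠ -2) :
    (hermannCurvatureVectors ι m a b).map (fun v => -v) ≠ hermannCurvatureVectors ι m a b := by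
  intro hinv
  obtain ⟨k⟩ := ‹Nonempty ι›
  exact neg_two_smul_single_notMem_hermannCurvatureVectors m ha hb k <|
    neg_mem_of_map_neg_eq_self hinv (two_smul_single_mem_hermannCurvatureVectors m a b k)

end CurvatureVectors

/-- The multiset of principal curvature vectors of the Hermann orbit
`N = SO(p+q)·(exp w)K` in `SU(p+q)/S(U(p)×U(q))` with `w = (π/8)(e₁+⋯+e_q)`
(Section 8 of the paper) is not negation-invariant, i.e. the orbit is not austere. -/
theorem hermann_orbit_not_austere (p q : ℕ) (hq : 1 ≤ q) (hpq : q < p) :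
    let e : Fin q → EuclideanSpace ℝ (Fin q) := fun i => EuclideanSpace.single i 1
    let M : Multiset (EuclideanSpace ℝ (Fin q)) :=
      (∑ i : Fin q, Multiset.replicate (p - q) ((-(Real.sqrt 2 + 1)) • e i)) +
      (∑ i : Fin q, ∑ j ∈ Finset.univ.filter (fun j => i < j), {-(e i + e j)}) +
      (∑ i : Fin q, {(2 : ℝ) • e i}) +
      (∑ i : Fin q, Multiset.replicate (p - q) ((Real.sqrt 2 - 1) • e i)) +
      (∑ i : Fin q, ∑ j ∈ Finset.univ.filter (fun j => i < j), {e i + e j}) +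
      (∑ i : Fin q, ∑ j ∈ Finset.univ.filter (fun j => i < j),
        ({0} : Multiset (EuclideanSpace ℝ (Fin q))))
    M.map (fun v => -v) ≠ M := by
  intro _ _
  have : Nonempty (Fin q) := ⟨⟨0, hq⟩⟩
  have hsqrt : 1 < √(2 : ℝ) := Real.one_lt_sqrt_two
  exact hermann_orbit_not_austere_general (p - q) (by linarith) (by linarith)
end

section
/- Let p > q ≥ 1 be integers and let e_1, …, e_q denote the standard orthonormal basis of Euclidean space ℝ^q. For a nonzero vector v ∈ ℝ^q define the (finite) count c(v) := (p−q)·#{(i,m) ∈ {1,…,q}×ℤ : v = −(π/8+mπ)⁻¹·e_i} + #{(i,j,m) : 1 ≤ i < j ≤ q, m ∈ ℤ, v = −(π/4+mπ)⁻¹·(e_i+e_j)} + #{(i,m) : v = −(3π/4+mπ)⁻¹·2e_i} + (p−q)·#{(i,m) : v = −(5π/8+mπ)⁻¹·e_i} + #{(i,j,m) : i < j, v = −(3π/4+mπ)⁻¹·(e_i+e_j)} + #{(i,j,m) : i < j, v = −(π/2+mπ)⁻¹·(e_i−e_j)} + #{(i,j,n) : i < j, n ∈ ℤ∖{0}, v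 = (nπ)⁻¹·(e_i−e_j)}. Then c(v) = c(−v) holds for every nonzero v ∈ ℝ^q if and only if p = q+1. -/
open Real

/-- Standard orthonormal basis vector `e_i` of `ℝ^q`. -/
noncomputable def stdVec (q : ℕ) (i : Fin q) : EuclideanSpace ℝ (Fin q) :=
  EuclideanSpace.single i 1

/-- The multiplicity `c(v)` of the nonzero principal curvature vector `v` of the orbit
`P(G,H×K)∗ŵ` of Section 8 of the paper (`G = SU(p+q)`, `K = S(U(p)×U(q))`,
`H = SO(p+q)`, `w = (π/8)(e₁+⋯+e_q)`). -/
noncomputable def pathOrbitCurvatureCount (p q : ℕ)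
    (v : EuclideanSpace ℝ (Fin q)) : ℕ :=
  (p - q) * Set.ncard {x : Fin q × ℤ |
      v = (-(π / 8 + x.2 * π)⁻¹) • stdVec q x.1} +
  Set.ncard {x : Fin q × Fin q × ℤ | x.1 < x.2.1 ∧
      v = (-(π / 4 + x.2.2 * π)⁻¹) • (stdVec q x.1 + stdVec q x.2.1)} +
  Set.ncard {x : Fin q × ℤ |
      v = (-(3 * π / 4 + x.2 * π)⁻¹) • ((2 : ℝ) • stdVec q x.1)} +
  (p - q) * Set.ncard {x : Fin q × ℤ |
      v = (-(5 * π / 8 + x.2 * π)⁻¹) • stdVec q x.1} +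
  Set.ncard {x : Fin q × Fin q × ℤ | x.1 < x.2.1 ∧
      v = (-(3 * π / 4 + x.2.2 * π)⁻¹) • (stdVec q x.1 + stdVec q x.2.1)} +
  Set.ncard {x : Fin q × Fin q × ℤ | x.1 < x.2.1 ∧
      v = (-(π / 2 + x.2.2 * π)⁻¹) • (stdVec q x.1 - stdVec q x.2.1)} +
  Set.ncard {x : Fin q × Fin q × ℤ | x.1 < x.2.1 ∧ x.2.2 ≠ 0 ∧
      v = ((x.2.2 * π)⁻¹ : ℝ) • (stdVec q x.1 - stdVec q x.2.1)}

/-!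
The multiplicity is a sum over the roots `α` of type `BC_q`, each with angles `a` and curvature
vectors `-(a + mπ)⁻¹ • α`. Since `m ↦ -k - m` identifies the families with angles `a` and `kπ - a`
up to sign, the roots `e_i ± e_j` contribute symmetrically. Splitting by the parity of `m`, the
root `2e_i` with angle `3π/4` is the root `e_i` with angles `3π/8` and `7π/8`, that is, the negative
of the root `e_i` with angles `5π/8` and `π/8`. Hence `c(v) = (p - q) A(v) + A(-v) + B(v)` with `B`
even and `A` the count for `e_i` with angles `π/8` and `5π/8`, so that
`c(v) - c(-v) = (p - q - 1) (A(v) - A(-v))`, and `A` is not even: it separates `±(π/8)⁻¹ • e_i`.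
-/

section Multiplicity

variable {ι E : Type*} [AddCommGroup E] [Module ℝ E]

/-- The multiplicity of `v` in the family of principal curvature vectors `-(a + mπ)⁻¹ • u i`,
`m ∈ ℤ`, attached to the roots `u i` at the common angle `a`. As a `Set.ncard`, it is `0` when
infinitely many parameters `(i, m)` give `v`. -/
noncomputable def curvatureMultiplicity (u : ι → E) (a : ℝ) (v : E) : ℕ :=
  Set.ncard {x : ι × ℤ | v = (-(a + x.2 * π)⁻¹) • u x.1}

theorem curvatureMultiplicity_neg (u : ι → E) {a b : ℝ} (k : ℤ) (hab : a + b = k * π) (v : E) :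
    curvatureMultiplicity u a (-v) = curvatureMultiplicity u b v := by
  let reflect : ι × ℤ ≃ ι × ℤ := (Equiv.refl ι).prodCongr (Equiv.subLeft (-k))
  refine Set.ncard_congr' (reflect.subtypeEquiv fun ⟨i, m⟩ ↦ ?_)
  have hangle : b + ((-k - m : ℤ) : ℝ) * π = -(a + m * π) := by
    push_cast
    linear_combination hab
  change -v = _ ↔ v = (-(b + ((-k - m : ℤ) : ℝ) * π)⁻¹) • u i
  rw [hangle, inv_neg, neg_eq_iff_eq_neg, ← neg_smul]

theorem finite_setOf_eq_neg_inv_smul [Finite ι] (u : ι → E) (a : ℝ) {v : E} (hv : v ≠ 0) :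
    {x : ι × ℤ | v = (-(a + x.2 * π)⁻¹) • u x.1}.Finite := by
  refine Set.Finite.of_finite_image (f := Prod.fst) (Set.toFinite _) ?_
  rintro ⟨i, m⟩ (hm : v = _ • u i) ⟨_, n⟩ (hn : v = _ • u _) rfl
  have hu : u i ≠ 0 := right_ne_zero_of_smul (hm ▸ hv)
  have hcoeff := smul_left_injective ℝ hu (hm.symm.trans hn)
  simpa [pi_ne_zero] using hcoeff

theorem ncard_preimage_add_ncard_preimage {α β γ : Type*} {f : α → γ} {g : β → γ}
    (hf : f.Injective) (hg : g.Injective) (hfg : IsCompl (Set.range f) (Set.range g))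
    {s : Set γ} (hs : s.Finite) : (f ⁻¹' s).ncard + (g ⁻¹' s).ncard = s.ncard := by
  rw [← Set.ncard_image_of_injective _ hf, ← Set.ncard_image_of_injective _ hg,
    Set.image_preimage_eq_inter_range, Set.image_preimage_eq_inter_range, ← hfg.compl_eq,
    ← Set.sdiff_eq, Set.ncard_inter_add_ncard_sdiff_eq_ncard _ _ hs]

theorem curvatureMultiplicity_two_smul [Finite ι] (u : ι → E) (a : ℝ) {v : E} (hv : v ≠ 0) :
    curvatureMultiplicity (fun i ↦ (2 : ℝ) • u i) a v =
      curvatureMultiplicity u (a / 2) v + curvatureMultiplicity u ((a + π) / 2) v := by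
  let double : ι × ℤ → ι × ℤ := Prod.map id (2 * ·)
  let doubleAddOne : ι × ℤ → ι × ℤ := Prod.map id (2 * · + 1)
  have hdouble : double.Injective :=
    Function.injective_id.prodMap fun m n (h : 2 * m = 2 * n) ↦ by omega
  have hdoubleAddOne : doubleAddOne.Injective :=
    Function.injective_id.prodMap fun m n (h : 2 * m + 1 = 2 * n + 1) ↦ by omega
  have hrange_double : Set.range double = Prod.snd ⁻¹' {n | Even n} := by
    ext ⟨i, n⟩
    simp [double, even_iff_exists_two_mul]
  have hrange_doubleAddOne : Set.range doubleAddOne = Prod.snd ⁻¹' {n | Odd n} := by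
    ext ⟨i, n⟩
    simp [doubleAddOne, Odd]
  have hcompl : IsCompl (Set.range double) (Set.range doubleAddOne) := by
    rw [hrange_double, hrange_doubleAddOne]
    exact Int.isCompl_even_odd.preimage _
  have hsmul (c : ℝ) (i : ι) : (-c⁻¹) • (2 : ℝ) • u i = (-(c / 2)⁻¹) • u i := by
    rw [smul_smul, inv_div, neg_mul, div_eq_inv_mul]
  have hfinite := finite_setOf_eq_neg_inv_smul (fun i ↦ (2 : ℝ) • u i) a hv
  rw [curvatureMultiplicity,
    ← ncard_preimage_add_ncard_preimage hdouble hdoubleAddOne hcompl hfinite]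
  congr 2
  · ext ⟨i, m⟩
    have hangle : (a + ((2 * m : ℤ) : ℝ) * π) / 2 = a / 2 + m * π := by push_cast; ring
    simp [double, hsmul, ← hangle]
  · ext ⟨i, m⟩
    have hangle : (a + ((2 * m + 1 : ℤ) : ℝ) * π) / 2 = (a + π) / 2 + m * π := by
      push_cast
      ring
    simp [doubleAddOne, hsmul, ← hangle]

theorem curvatureMultiplicity_neg_inv_smul_eq_zero_iff [Finite ι] {u : ι → E}
    (hu : LinearIndependent ℝ u) (a : ℝ) {b : ℝ} (hb : b ≠ 0) (i : ι) :
    curvatureMultiplicity u a ((-b⁻¹) • u i) = 0 ↔ ∀ m : ℤ, a + m * π ≠ b := by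
  have hcoeff : -b⁻¹ ≠ 0 := neg_ne_zero.2 (inv_ne_zero hb)
  have hv : (-b⁻¹) • u i ≠ 0 := smul_ne_zero hcoeff (hu.ne_zero i)
  rw [curvatureMultiplicity, Set.ncard_eq_zero (finite_setOf_eq_neg_inv_smul u a hv),
    Set.eq_empty_iff_forall_notMem]
  refine ⟨fun h m hm ↦ h (i, m) (by simp [hm]), ?_⟩
  rintro h ⟨j, m⟩ (hjm : _ = _ • u j)
  obtain rfl : i = j := hu.eq_of_smul_apply_eq_smul_apply _ _ _ _ hcoeff hjm
  have hinv := smul_left_injective ℝ (hu.ne_zero i) hjm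
  exact h m (inv_injective (neg_injective hinv)).symm

end Multiplicity

theorem ncard_setOf_and_eq_ncard_subtype {α β γ : Type*} (r : α → β → Prop)
    (P : α → β → γ → Prop) :
    Set.ncard {x : α × β × γ | r x.1 x.2.1 ∧ P x.1 x.2.1 x.2.2} =
      Set.ncard {y : {z : α × β // r z.1 z.2} × γ | P y.1.1.1 y.1.1.2 y.2} := by
  symm
  refine Set.ncard_congr (fun y _ ↦ (y.1.1.1, y.1.1.2, y.2)) (fun y hy ↦ ⟨y.1.2, hy⟩) ?_ ?_
  · rintro ⟨⟨⟨a, b⟩, _⟩, c⟩ ⟨⟨⟨a', b'⟩, _⟩, c'⟩ _ _ h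
    simpa [and_assoc] using h
  · rintro ⟨a, b, c⟩ ⟨hr, hP⟩
    exact ⟨(⟨(a, b), hr⟩, c), hP, rfl⟩

section PathOrbit

variable {p q : ℕ} {v : EuclideanSpace ℝ (Fin q)}

/-- The roots `e_i + e_j`, indexed by the pairs `i < j`. -/
noncomputable def sumRoot (q : ℕ) (x : {x : Fin q × Fin q // x.1 < x.2}) :
    EuclideanSpace ℝ (Fin q) :=
  stdVec q x.1.1 + stdVec q x.1.2

/-- The roots `e_i - e_j`, indexed by the pairs `i < j`. -/
noncomputable def diffRoot (q : ℕ) (x : {x : Fin q × Fin q // x.1 < x.2}) :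
    EuclideanSpace ℝ (Fin q) :=
  stdVec q x.1.1 - stdVec q x.1.2

/-- The contribution of the short roots `e_i` to the multiplicity of `v`, not counting their
root multiplicity `p - q`. -/
noncomputable def shortRootMultiplicity (v : EuclideanSpace ℝ (Fin q)) : ℕ :=
  curvatureMultiplicity (stdVec q) (π / 8) v + curvatureMultiplicity (stdVec q) (5 * π / 8) v

/-- The contribution of the roots `2e_i` to the multiplicity of `v`. -/
noncomputable def longRootMultiplicity (v : EuclideanSpace ℝ (Fin q)) : ℕ :=
  curvatureMultiplicity (fun i ↦ (2 : ℝ) • stdVec q i) (3 * π / 4) v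

/-- The contribution of the roots `e_i ± e_j` to the multiplicity of `v`. -/
noncomputable def middleRootMultiplicity (v : EuclideanSpace ℝ (Fin q)) : ℕ :=
  curvatureMultiplicity (sumRoot q) (π / 4) v + curvatureMultiplicity (sumRoot q) (3 * π / 4) v +
    curvatureMultiplicity (diffRoot q) (π / 2) v + curvatureMultiplicity (diffRoot q) 0 v

theorem ncard_sum_eq_curvatureMultiplicity (a : ℝ) (v : EuclideanSpace ℝ (Fin q)) :
    Set.ncard {x : Fin q × Fin q × ℤ | x.1 < x.2.1 ∧
      v = (-(a + x.2.2 * π)⁻¹) • (stdVec q x.1 + stdVec q x.2.1)} =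
    curvatureMultiplicity (sumRoot q) a v :=
  ncard_setOf_and_eq_ncard_subtype (· < ·)
    fun i j (m : ℤ) ↦ v = (-(a + m * π)⁻¹) • (stdVec q i + stdVec q j)

theorem ncard_diff_eq_curvatureMultiplicity (a : ℝ) (v : EuclideanSpace ℝ (Fin q)) :
    Set.ncard {x : Fin q × Fin q × ℤ | x.1 < x.2.1 ∧
      v = (-(a + x.2.2 * π)⁻¹) • (stdVec q x.1 - stdVec q x.2.1)} =
    curvatureMultiplicity (diffRoot q) a v :=
  ncard_setOf_and_eq_ncard_subtype (· < ·)
    fun i j (m : ℤ) ↦ v = (-(a + m * π)⁻¹) • (stdVec q i - stdVec q j)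

theorem ncard_diff_ne_zero_eq_curvatureMultiplicity (hv : v ≠ 0) :
    Set.ncard {x : Fin q × Fin q × ℤ | x.1 < x.2.1 ∧ x.2.2 ≠ 0 ∧
      v = ((x.2.2 * π)⁻¹ : ℝ) • (stdVec q x.1 - stdVec q x.2.1)} =
    curvatureMultiplicity (diffRoot q) 0 v := by
  rw [← curvatureMultiplicity_neg (diffRoot q) (a := 0) 0 (by simp) v,
    ← ncard_diff_eq_curvatureMultiplicity]
  congr with ⟨i, j, n⟩
  -- At `n = 0` the vector `(nπ)⁻¹ • (e_i - e_j)` is `0 ≠ v`, because `0⁻¹ = 0`.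
  have hn (h : v = ((n * π)⁻¹ : ℝ) • (stdVec q i - stdVec q j)) : n ≠ 0 := by
    rintro rfl
    simp [hv] at h
  simp only [zero_add, neg_smul, neg_inj]
  tauto

theorem pathOrbitCurvatureCount_eq (hv : v ≠ 0) :
    pathOrbitCurvatureCount p q v =
      (p - q) * shortRootMultiplicity v + longRootMultiplicity v + middleRootMultiplicity v := by
  rw [pathOrbitCurvatureCount, ncard_sum_eq_curvatureMultiplicity,
    ncard_sum_eq_curvatureMultiplicity, ncard_diff_eq_curvatureMultiplicity,
    ncard_diff_ne_zero_eq_curvatureMultiplicity hv]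
  simp only [shortRootMultiplicity, longRootMultiplicity, middleRootMultiplicity,
    curvatureMultiplicity]
  ring

theorem middleRootMultiplicity_neg (v : EuclideanSpace ℝ (Fin q)) :
    middleRootMultiplicity (-v) = middleRootMultiplicity v := by
  simp only [middleRootMultiplicity]
  rw [curvatureMultiplicity_neg (sumRoot q) (a := π / 4) (b := 3 * π / 4) 1 (by push_cast; ring),
    curvatureMultiplicity_neg (sumRoot q) (a := 3 * π / 4) (b := π / 4) 1 (by push_cast; ring),
    curvatureMultiplicity_neg (diffRoot q) (a := π / 2) (b := π / 2) 1 (by push_cast; ring),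
    curvatureMultiplicity_neg (diffRoot q) (a := 0) (b := 0) 0 (by simp)]
  ring

theorem longRootMultiplicity_eq (hv : v ≠ 0) :
    longRootMultiplicity v = shortRootMultiplicity (-v) := by
  rw [longRootMultiplicity, curvatureMultiplicity_two_smul _ _ hv, shortRootMultiplicity,
    curvatureMultiplicity_neg (stdVec q) (a := π / 8) (b := (3 * π / 4 + π) / 2) 1
      (by push_cast; ring),
    curvatureMultiplicity_neg (stdVec q) (a := 5 * π / 8) (b := 3 * π / 4 / 2) 1
      (by push_cast; ring),
    add_comm]

theorem linearIndependent_stdVec (q : ℕ) : LinearIndependent ℝ (stdVec q) :=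
  EuclideanSpace.orthonormal_single.linearIndependent

theorem exists_shortRootMultiplicity_neg_ne (hq : 1 ≤ q) :
    ∃ v : EuclideanSpace ℝ (Fin q),
      v ≠ 0 ∧ shortRootMultiplicity (-v) ≠ shortRootMultiplicity v := by
  let i : Fin q := ⟨0, hq⟩
  let v : EuclideanSpace ℝ (Fin q) := (-(π / 8)⁻¹) • stdVec q i
  have hli := linearIndependent_stdVec q
  have hpi : π / 8 ≠ 0 := by positivity
  have hne : v ≠ 0 := smul_ne_zero (neg_ne_zero.2 (inv_ne_zero hpi)) (hli.ne_zero i)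
  have hv : curvatureMultiplicity (stdVec q) (π / 8) v ≠ 0 := by
    rw [Ne, curvatureMultiplicity_neg_inv_smul_eq_zero_iff hli _ hpi]
    exact fun h ↦ h 0 (by simp)
  have hneg : -v = (-(-(π / 8))⁻¹) • stdVec q i := by rw [inv_neg, neg_smul (-(π / 8)⁻¹)]
  have hzero (k : ℤ) (hk : ¬ 8 ∣ k + 1) :
      curvatureMultiplicity (stdVec q) (k * π / 8) (-v) = 0 := by
    rw [hneg, curvatureMultiplicity_neg_inv_smul_eq_zero_iff hli _ (neg_ne_zero.2 hpi)]
    intro m hm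
    have hm' : (k + 1 + 8 * m : ℝ) = 0 := by
      refine (mul_eq_zero.1 ?_).resolve_right pi_ne_zero
      linear_combination 8 * hm
    norm_cast at hm'
    omega
  have hone := hzero 1 (by decide)
  have hfive := hzero 5 (by decide)
  push_cast at hone hfive
  rw [one_mul] at hone
  refine ⟨v, hne, ?_⟩
  rw [shortRootMultiplicity, shortRootMultiplicity, hone, hfive]
  omega

end PathOrbit

/-- Section 8 of the paper: the `P(G,H×K)`-orbit is an austere PF submanifold — i.e.
`c(v) = c(-v)` for every nonzero `v` — if and only if `p = q + 1`. -/
theorem path_orbit_austere_iff (p q : ℕ) (hq : 1 ≤ q) (hpq : q < p) :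
    (∀ v : EuclideanSpace ℝ (Fin q), v ≠ 0 →
        pathOrbitCurvatureCount p q v = pathOrbitCurvatureCount p q (-v)) ↔
      p = q + 1 := by
  have hcount {v : EuclideanSpace ℝ (Fin q)} (hv : v ≠ 0) : pathOrbitCurvatureCount p q v =
      (p - q) * shortRootMultiplicity v + shortRootMultiplicity (-v) +
        middleRootMultiplicity v := by
    rw [pathOrbitCurvatureCount_eq hv, longRootMultiplicity_eq hv]
  constructor
  · intro haustere
    obtain ⟨v, hv, hasymm⟩ := exists_shortRootMultiplicity_neg_ne hq
    have hc := haustere v hv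
    rw [hcount hv, hcount (neg_ne_zero.2 hv), neg_neg, middleRootMultiplicity_neg] at hc
    obtain ⟨d, rfl⟩ := Nat.exists_eq_add_of_lt hpq
    rw [show q + d + 1 - q = d + 1 by omega, add_one_mul, add_one_mul] at hc
    have hmul : d * shortRootMultiplicity (-v) = d * shortRootMultiplicity v := by omega
    have hd : d = 0 := (mul_eq_mul_left_iff.1 hmul).resolve_left hasymm
    rw [hd]
  · rintro rfl v hv
    rw [hcount hv, hcount (neg_ne_zero.2 hv), neg_neg, middleRootMultiplicity_neg,
      Nat.add_sub_cancel_left]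
    ring
end
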